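/- Let μ > 0 and let f be a strictly positive classical solution of the BDY PDE on [0,∞) × [0,∞) which is for each t a probability density with mean μ, satisfies the entropy dissipation identity d/dt H[f|f∞](t) = − D[f](t) for all t ≥ 0, and has finite initial relative entropy H[f⁰|f∞] < ∞ where f⁰ = f(·,0). Then there exists a sequence of times τ_k → ∞ such that both the Hellinger distance d_H( f(·,τ_k), f∞ ) → 0 and the L¹ distance ∫₀^∞ | f(v,τ_k) − f∞(v) | dv → 0 as k → ∞. -/

import Mathlib

open MeasureTheory Set Filter

lemma bdy_right_deriv_nonpos {g : ℝ → ℝ} {g' x h : ℝ} (hg : HasDerivAt g g' x) (hh : 0 < h)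
    (hle : ∀ y ∈ Icc x (x + h), g y ≤ g x) : g' ≤ 0 := by
  have h1 := hg.hasDerivWithinAt (s := Ioi x)
  rw [hasDerivWithinAt_iff_tendsto_slope' (by simp)] at h1
  refine le_of_tendsto h1 ?_
  filter_upwards [Ioo_mem_nhdsGT (show x < x + h by linarith)] with y hy
  rw [slope_def_field]
  exact div_nonpos_of_nonpos_of_nonneg (by linarith [hle y ⟨hy.1.le, hy.2.le⟩]) (by linarith [hy.1])

lemma bdy_left_deriv_nonneg {g : ℝ → ℝ} {g' x h : ℝ} (hg : HasDerivAt g g' x) (hh : 0 < h)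
    (hle : ∀ y ∈ Icc (x - h) x, g y ≤ g x) : 0 ≤ g' := by
  have h1 := hg.hasDerivWithinAt (s := Iio x)
  rw [hasDerivWithinAt_iff_tendsto_slope' (by simp)] at h1
  refine ge_of_tendsto h1 ?_
  filter_upwards [Ioo_mem_nhdsLT (show x - h < x by linarith)] with y hy
  rw [slope_def_field]
  exact div_nonneg_of_nonpos (by linarith [hle y ⟨hy.1.le, hy.2.le⟩]) (by linarith [hy.2])

lemma bdy_second_deriv_nonpos {g g1 : ℝ → ℝ} {g2 x h : ℝ} (hh : 0 < h)
    (hg : ∀ y ∈ Ioo (x - h) (x + h), HasDerivAt g (g1 y) y) (hg2 : HasDerivAt g1 g2 x)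
    (hle : ∀ y ∈ Ioo (x - h) (x + h), g y ≤ g x) : g2 ≤ 0 := by
  by_contra hcon
  push Not at hcon
  have hmax : IsLocalMax g x := by
    filter_upwards [Ioo_mem_nhds (show x - h < x by linarith) (show x < x + h by linarith)] with y hy
    exact hle y hy
  have h0 : g1 x = 0 := hmax.hasDerivAt_eq_zero (hg x ⟨by linarith, by linarith⟩)
  have h1 := hg2.hasDerivWithinAt (s := Ioi x)
  rw [hasDerivWithinAt_iff_tendsto_slope' (by simp)] at h1
  have h2 : ∀ᶠ y in nhdsWithin x (Ioi x), 0 < slope g1 x y := h1.eventually (lt_mem_nhds hcon)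
  obtain ⟨k, hk, hk2⟩ := mem_nhdsGT_iff_exists_Ioo_subset.1 h2
  simp only [mem_Ioi] at hk
  set z := min ((x + k) / 2) (x + h / 2) with hz
  have hz1 : x < z := lt_min (by linarith) (by linarith)
  have hz2 : z < k := lt_of_le_of_lt (min_le_left _ _) (by linarith)
  have hz3 : z < x + h := lt_of_le_of_lt (min_le_right _ _) (by linarith)
  obtain ⟨c, hc, hc2⟩ := exists_hasDerivAt_eq_slope g g1 hz1
    (fun y hy => (hg y ⟨by linarith [hy.1], by linarith [hy.2]⟩).continuousAt.continuousWithinAt)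
    (fun y hy => hg y ⟨by linarith [hy.1], by linarith [hy.2]⟩)
  have h3 : 0 < slope g1 x c := hk2 ⟨hc.1, hc.2.trans hz2⟩
  rw [slope_def_field, h0, sub_zero] at h3
  have h4 : 0 < g1 c := by
    have : 0 < c - x := by linarith [hc.1]
    exact (div_pos_iff_of_pos_right this).1 h3
  rw [hc2] at h4
  have h5 : 0 < z - x := by linarith
  have := (div_pos_iff_of_pos_right h5).1 h4
  linarith [hle z ⟨by linarith, hz3⟩]

lemma bdy_grad_up (u ux uxx ut : ℝ → ℝ → ℝ) (a : ℝ → ℝ) (x0 t0 r A M : ℝ) (hr : 0 < r)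
    (hA : 0 ≤ A) (hM : 0 < M)
    (hc : ContinuousOn (fun p : ℝ × ℝ => u p.1 p.2) (Icc (x0 - r) (x0 + r) ×ˢ Icc (t0 - r ^ 2) t0))
    (hux : ∀ x ∈ Icc (x0 - r) (x0 + r), ∀ t ∈ Icc (t0 - r ^ 2) t0,
      HasDerivAt (fun w => u w t) (ux x t) x)
    (huxx : ∀ x ∈ Icc (x0 - r) (x0 + r), ∀ t ∈ Icc (t0 - r ^ 2) t0,
      HasDerivAt (fun w => ux w t) (uxx x t) x)
    (hut : ∀ x ∈ Icc (x0 - r) (x0 + r), ∀ t ∈ Icc (t0 - r ^ 2) t0,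
      HasDerivAt (fun s => u x s) (ut x t) t)
    (hpde : ∀ x ∈ Icc (x0 - r) (x0 + r), ∀ t ∈ Icc (t0 - r ^ 2) t0,
      ut x t = uxx x t + a t * ux x t)
    (ha : ∀ t ∈ Icc (t0 - r ^ 2) t0, |a t| ≤ A)
    (hu : ∀ x ∈ Icc (x0 - r) (x0 + r), ∀ t ∈ Icc (t0 - r ^ 2) t0, |u x t| ≤ M) :
    ux x0 t0 ≤ M * (3 + 2 * A * r) / r := by
  have hr2 : 0 < r ^ 2 := by positivity
  set Lc := 1 + 2 * A * r with hL
  have hLp : 1 ≤ Lc := by have : 0 ≤ A * r := by positivity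
                          linarith
  set Ψ : ℝ → ℝ → ℝ → ℝ := fun c d t =>
    2 * M * (4 * c ^ 2 / r ^ 2 + (t0 - t) / r ^ 2 + ((2 + Lc) * (d / r) - Lc * (d / r) ^ 2)) with hΨ
  set W : ℝ × ℝ × ℝ → ℝ := fun p =>
    u (x0 + p.1 + p.2.1) p.2.2 - u (x0 + p.1 - p.2.1) p.2.2 - Ψ p.1 p.2.1 p.2.2 with hW
  set B : Set (ℝ × ℝ × ℝ) := Icc (-(r / 2)) (r / 2) ×ˢ (Icc 0 (r / 2) ×ˢ Icc (t0 - r ^ 2) t0) with hB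
  have hBc : IsCompact B := isCompact_Icc.prod (isCompact_Icc.prod isCompact_Icc)
  have hWc : ContinuousOn W B := by
    have e1 : ContinuousOn (fun p : ℝ × ℝ × ℝ => u (x0 + p.1 + p.2.1) p.2.2) B := by
      refine hc.comp (f := fun p : ℝ × ℝ × ℝ => (x0 + p.1 + p.2.1, p.2.2)) (by fun_prop) ?_
      rintro ⟨c, d, t⟩ ⟨h1, h2, h3⟩
      exact ⟨⟨by linarith [h1.1, h2.1], by linarith [h1.2, h2.2]⟩, h3⟩
    have e2 : ContinuousOn (fun p : ℝ × ℝ × ℝ => u (x0 + p.1 - p.2.1) p.2.2) B := by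
      refine hc.comp (f := fun p : ℝ × ℝ × ℝ => (x0 + p.1 - p.2.1, p.2.2)) (by fun_prop) ?_
      rintro ⟨c, d, t⟩ ⟨h1, h2, h3⟩
      exact ⟨⟨by linarith [h1.1, h2.2], by linarith [h1.2, h2.1]⟩, h3⟩
    refine (e1.sub e2).sub ?_
    simp only [hΨ]
    fun_prop
  have hneg : ∀ p ∈ B, W p ≤ 0 := by
    obtain ⟨⟨c, d, t⟩, hp, hmax⟩ := hBc.exists_isMaxOn ⟨(0, 0, t0), by
      refine ⟨⟨by linarith, by linarith⟩, ⟨by simp, by simp; linarith⟩, ⟨by linarith, le_rfl⟩⟩⟩ hWc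
    intro q hq
    refine (hmax hq).trans ?_
    by_contra hpos
    push Not at hpos
    obtain ⟨⟨hc1, hc2⟩, ⟨hd1, hd2⟩, ⟨ht1, ht2⟩⟩ := hp
    simp only at hc1 hc2 hd1 hd2 ht1 ht2
    have hxm : x0 + c + d ∈ Icc (x0 - r) (x0 + r) := ⟨by linarith, by linarith⟩
    have hym : x0 + c - d ∈ Icc (x0 - r) (x0 + r) := ⟨by linarith, by linarith⟩
    have htm : t ∈ Icc (t0 - r ^ 2) t0 := ⟨ht1, ht2⟩
    have hdr0 : 0 ≤ d / r := by positivity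
    have hdr1 : d / r ≤ 1 / 2 := by rw [div_le_iff₀ hr]; linarith
    have hdpart : 0 ≤ (2 + Lc) * (d / r) - Lc * (d / r) ^ 2 := by
      have : 0 ≤ (d / r) * (1 / 2 - d / r) := mul_nonneg hdr0 (by linarith)
      nlinarith
    have hcpart : 0 ≤ 4 * c ^ 2 / r ^ 2 := by positivity
    have htpart : 0 ≤ (t0 - t) / r ^ 2 := div_nonneg (by linarith) hr2.le
    have hu2 : u (x0 + c + d) t - u (x0 + c - d) t ≤ 2 * M := by
      have := abs_le.1 (hu _ hxm t htm)
      have := abs_le.1 (hu _ hym t htm)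
      linarith
    have hlt : 4 * c ^ 2 / r ^ 2 + (t0 - t) / r ^ 2 + ((2 + Lc) * (d / r) - Lc * (d / r) ^ 2) < 1 := by
      by_contra hcon
      push Not at hcon
      have : W (c, d, t) ≤ 0 := by
        simp only [hW, hΨ]; nlinarith
      linarith
    have hd0 : 0 < d := by
      rcases hd1.lt_or_eq with h | h
      · exact h
      · exfalso
        subst h
        simp only [hW, hΨ, add_zero, sub_zero, sub_self, zero_div, mul_zero] at hpos
        have : 0 ≤ 2 * M * (4 * c ^ 2 / r ^ 2 + (t0 - t) / r ^ 2) := by positivity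
        norm_num at hpos
        linarith
    have hdlt : d < r / 2 := by
      rcases hd2.lt_or_eq with h | h
      · exact h
      · exfalso
        have : d / r = 1 / 2 := by rw [h]; field_simp
        rw [this] at hlt
        nlinarith
    have hclt : c ^ 2 < (r / 2) ^ 2 := by
      have : 4 * c ^ 2 / r ^ 2 < 1 := by linarith
      rw [div_lt_one hr2] at this
      nlinarith
    have hc3 : -(r / 2) < c ∧ c < r / 2 := abs_lt.1 (abs_lt_of_sq_lt_sq hclt (by linarith))
    have htlt : t0 - r ^ 2 < t := by
      have : (t0 - t) / r ^ 2 < 1 := by linarith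
      rw [div_lt_one hr2] at this
      linarith
    -- derivative in c
    have Dc : HasDerivAt (fun c' => W (c', d, t))
        (ux (x0 + c + d) t - ux (x0 + c - d) t - 2 * M * (8 * c / r ^ 2)) c := by
      have e1 := (hux _ hxm t htm).comp c (((hasDerivAt_id c).const_add x0).add_const d)
      have e2 := (hux _ hym t htm).comp c (((hasDerivAt_id c).const_add x0).sub_const d)
      have e3 : HasDerivAt (fun c' => Ψ c' d t) (2 * M * (8 * c / r ^ 2)) c := by
        simp only [hΨ]
        have := (((((hasDerivAt_id c).pow 2).const_mul 4).div_const (r ^ 2)).add_const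
          ((t0 - t) / r ^ 2)).add_const ((2 + Lc) * (d / r) - Lc * (d / r) ^ 2) |>.const_mul (2 * M)
        refine this.congr_deriv ?_
        simp only [id]; push_cast; ring
      refine ((e1.sub e2).sub e3).congr_deriv (by ring)
    have Dc0 : ux (x0 + c + d) t - ux (x0 + c - d) t - 2 * M * (8 * c / r ^ 2) = 0 := by
      refine IsLocalMax.hasDerivAt_eq_zero ?_ Dc
      filter_upwards [Ioo_mem_nhds hc3.1 hc3.2] with y hy
      exact hmax ⟨⟨hy.1.le, hy.2.le⟩, ⟨hd1, hd2⟩, htm⟩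
    -- derivative in t
    have Dt : HasDerivAt (fun t' => W (c, d, t'))
        (ut (x0 + c + d) t - ut (x0 + c - d) t - 2 * M * (-1 / r ^ 2)) t := by
      have e1 := hut _ hxm t htm
      have e2 := hut _ hym t htm
      have e3 : HasDerivAt (fun t' => Ψ c d t') (2 * M * (-1 / r ^ 2)) t := by
        simp only [hΨ]
        have := ((((hasDerivAt_id t).const_sub t0).div_const (r ^ 2)).const_add
          (4 * c ^ 2 / r ^ 2)).add_const ((2 + Lc) * (d / r) - Lc * (d / r) ^ 2) |>.const_mul (2 * M)
        exact this
      exact (e1.sub e2).sub e3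
    have Dt0 : 0 ≤ ut (x0 + c + d) t - ut (x0 + c - d) t - 2 * M * (-1 / r ^ 2) := by
      refine bdy_left_deriv_nonneg Dt (h := t - (t0 - r ^ 2)) (by linarith) ?_
      intro y hy
      exact hmax ⟨⟨hc1, hc2⟩, ⟨hd1, hd2⟩, ⟨by linarith [hy.1], by linarith [hy.2]⟩⟩
    -- second derivative in d
    have Dd : uxx (x0 + c + d) t - uxx (x0 + c - d) t - 2 * M * (-(2 * Lc / r ^ 2)) ≤ 0 := by
      obtain ⟨h, hh, hh1, hh2⟩ : ∃ h > 0, h ≤ d ∧ h ≤ r / 2 - d :=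
        ⟨min d (r / 2 - d), lt_min hd0 (by linarith), min_le_left _ _, min_le_right _ _⟩
      refine bdy_second_deriv_nonpos (g := fun d' => W (c, d', t))
        (g1 := fun d' => ux (x0 + c + d') t + ux (x0 + c - d') t
          - 2 * M * ((2 + Lc) / r - Lc * (2 * d' / r ^ 2))) (x := d) hh ?_ ?_ ?_
      · intro y hy
        have hxm' : x0 + c + y ∈ Icc (x0 - r) (x0 + r) :=
          ⟨by linarith [hy.1], by linarith [hy.2]⟩
        have hym' : x0 + c - y ∈ Icc (x0 - r) (x0 + r) :=
          ⟨by linarith [hy.2], by linarith [hy.1]⟩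
        have e1 := (hux _ hxm' t htm).comp y ((hasDerivAt_id y).const_add (x0 + c))
        have e2 := (hux _ hym' t htm).comp y ((hasDerivAt_id y).const_sub (x0 + c))
        have e3 : HasDerivAt (fun d' => Ψ c d' t)
            (2 * M * ((2 + Lc) / r - Lc * (2 * y / r ^ 2))) y := by
          simp only [hΨ]
          have := ((((hasDerivAt_id y).div_const r).const_mul (2 + Lc)).sub
            ((((hasDerivAt_id y).div_const r).pow 2).const_mul Lc)).const_add
            (4 * c ^ 2 / r ^ 2 + (t0 - t) / r ^ 2) |>.const_mul (2 * M)
          refine this.congr_deriv ?_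
          simp only [id]; push_cast; ring
        refine ((e1.sub e2).sub e3).congr_deriv (by ring)
      · have e1 := (huxx _ hxm t htm).comp d ((hasDerivAt_id d).const_add (x0 + c))
        have e2 := (huxx _ hym t htm).comp d ((hasDerivAt_id d).const_sub (x0 + c))
        have e3 : HasDerivAt (fun d' => 2 * M * ((2 + Lc) / r - Lc * (2 * d' / r ^ 2)))
            (2 * M * (-(2 * Lc / r ^ 2))) d := by
          have := ((((hasDerivAt_id d).const_mul 2).div_const (r ^ 2)).const_mul Lc).const_sub
            ((2 + Lc) / r) |>.const_mul (2 * M)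
          refine this.congr_deriv ?_
          ring
        refine ((e1.add e2).sub e3).congr_deriv (by ring)
      · intro y hy
        exact hmax ⟨⟨hc1, hc2⟩, ⟨by linarith [hy.1], by linarith [hy.2]⟩, htm⟩
    have p1 := hpde _ hxm t htm
    have p2 := hpde _ hym t htm
    have hat := abs_le.1 (ha t htm)
    have key : a t * (ux (x0 + c + d) t - ux (x0 + c - d) t) ≤ 2 * M * (4 * A * r / r ^ 2) := by
      have : ux (x0 + c + d) t - ux (x0 + c - d) t = 2 * M * (8 * c / r ^ 2) := by linarith
      rw [this]
      have h1 : a t * c ≤ A * (r / 2) := by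
        calc a t * c ≤ |a t * c| := le_abs_self _
          _ = |a t| * |c| := abs_mul _ _
          _ ≤ A * (r / 2) := mul_le_mul (ha t htm) (abs_le.2 ⟨hc1, hc2⟩) (abs_nonneg _) hA
      have h2 : a t * (2 * M * (8 * c / r ^ 2)) = (a t * c) * (16 * M / r ^ 2) := by ring
      have h3 : 2 * M * (4 * A * r / r ^ 2) = (A * (r / 2)) * (16 * M / r ^ 2) := by ring
      rw [h2, h3]
      exact mul_le_mul_of_nonneg_right h1 (by positivity)
    have fin : 0 ≤ 2 * M * (4 * A * r / r ^ 2) + 2 * M * (-(2 * Lc / r ^ 2)) - 2 * M * (-1 / r ^ 2) := by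
      nlinarith
    have fin2 : 2 * M * (4 * A * r / r ^ 2) + 2 * M * (-(2 * Lc / r ^ 2)) - 2 * M * (-1 / r ^ 2)
        = - (2 * M / r ^ 2) := by rw [hL]; ring
    rw [fin2] at fin
    have : 0 < 2 * M / r ^ 2 := by positivity
    linarith
  have hx0 : x0 ∈ Icc (x0 - r) (x0 + r) := ⟨by linarith, by linarith⟩
  have ht0 : t0 ∈ Icc (t0 - r ^ 2) t0 := ⟨by linarith, le_rfl⟩
  have hfin : ux x0 t0 + ux x0 t0 - 2 * M * ((2 + Lc) / r) ≤ 0 := by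
    have hx0' : HasDerivAt (fun w => u w t0) (ux x0 t0) (x0 + id 0) := by simpa using hux x0 hx0 t0 ht0
    have hx0'' : HasDerivAt (fun w => u w t0) (ux x0 t0) (x0 - id 0) := by simpa using hux x0 hx0 t0 ht0
    have e1 := hx0'.comp (0:ℝ) ((hasDerivAt_id (0:ℝ)).const_add x0)
    have e2 := hx0''.comp (0:ℝ) ((hasDerivAt_id (0:ℝ)).const_sub x0)
    have e3 : HasDerivAt (fun d : ℝ => 2 * M * ((2 + Lc) * (d / r))) (2 * M * ((2 + Lc) / r)) 0 := by
      have := (((hasDerivAt_id (0:ℝ)).div_const r).const_mul (2 + Lc)).const_mul (2 * M)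
      refine this.congr_deriv ?_
      ring
    refine bdy_right_deriv_nonpos (((e1.sub e2).sub e3).congr_deriv (by ring)) (h := r / 2)
      (by linarith) ?_
    intro y hy
    have := hneg (0, y, t0) ⟨⟨by linarith, by linarith⟩, ⟨hy.1, by linarith [hy.2]⟩, ht0⟩
    simp only [hW, hΨ] at this
    have h4 : 0 ≤ 2 * M * (Lc * (y / r) ^ 2) := by positivity
    simp at this ⊢
    nlinarith
  have h3 : M * (3 + 2 * A * r) / r = M * ((2 + Lc) / r) := by rw [hL]; ring
  rw [h3]; linarith

lemma bdy_grad (u ux uxx ut : ℝ → ℝ → ℝ) (a : ℝ → ℝ) (x0 t0 r A M : ℝ) (hr : 0 < r)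
    (hA : 0 ≤ A) (hM : 0 < M)
    (hc : ContinuousOn (fun p : ℝ × ℝ => u p.1 p.2) (Icc (x0 - r) (x0 + r) ×ˢ Icc (t0 - r ^ 2) t0))
    (hux : ∀ x ∈ Icc (x0 - r) (x0 + r), ∀ t ∈ Icc (t0 - r ^ 2) t0,
      HasDerivAt (fun w => u w t) (ux x t) x)
    (huxx : ∀ x ∈ Icc (x0 - r) (x0 + r), ∀ t ∈ Icc (t0 - r ^ 2) t0,
      HasDerivAt (fun w => ux w t) (uxx x t) x)
    (hut : ∀ x ∈ Icc (x0 - r) (x0 + r), ∀ t ∈ Icc (t0 - r ^ 2) t0,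
      HasDerivAt (fun s => u x s) (ut x t) t)
    (hpde : ∀ x ∈ Icc (x0 - r) (x0 + r), ∀ t ∈ Icc (t0 - r ^ 2) t0,
      ut x t = uxx x t + a t * ux x t)
    (ha : ∀ t ∈ Icc (t0 - r ^ 2) t0, |a t| ≤ A)
    (hu : ∀ x ∈ Icc (x0 - r) (x0 + r), ∀ t ∈ Icc (t0 - r ^ 2) t0, |u x t| ≤ M) :
    |ux x0 t0| ≤ M * (3 + 2 * A * r) / r := by
  refine abs_le.2 ⟨?_, bdy_grad_up u ux uxx ut a x0 t0 r A M hr hA hM hc hux huxx hut hpde ha hu⟩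
  have := bdy_grad_up (fun x t => - u x t) (fun x t => - ux x t) (fun x t => - uxx x t)
    (fun x t => - ut x t) a x0 t0 r A M hr hA hM hc.neg
    (fun x hx t ht => (hux x hx t ht).neg) (fun x hx t ht => (huxx x hx t ht).neg)
    (fun x hx t ht => (hut x hx t ht).neg)
    (fun x hx t ht => by rw [hpde x hx t ht]; ring) ha
    (fun x hx t ht => by rw [abs_neg]; exact hu x hx t ht)
  linarith

/-- Interior bound on the second space derivative. -/
lemma bdy_hess (u ux uxx ut : ℝ → ℝ → ℝ) (a : ℝ → ℝ) (x0 t0 r A M : ℝ) (hr : 0 < r) (hr1 : r ≤ 1)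
    (hA : 0 ≤ A) (hM : 0 < M)
    (hc : ContinuousOn (fun p : ℝ × ℝ => u p.1 p.2) (Icc (x0 - r) (x0 + r) ×ˢ Icc (t0 - r ^ 2) t0))
    (hux : ∀ x ∈ Icc (x0 - r) (x0 + r), ∀ t ∈ Icc (t0 - r ^ 2) t0,
      HasDerivAt (fun w => u w t) (ux x t) x)
    (huxx : ∀ x ∈ Icc (x0 - r) (x0 + r), ∀ t ∈ Icc (t0 - r ^ 2) t0,
      HasDerivAt (fun w => ux w t) (uxx x t) x)
    (hut : ∀ x ∈ Icc (x0 - r) (x0 + r), ∀ t ∈ Icc (t0 - r ^ 2) t0,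
      HasDerivAt (fun s => u x s) (ut x t) t)
    (hpde : ∀ x ∈ Icc (x0 - r) (x0 + r), ∀ t ∈ Icc (t0 - r ^ 2) t0,
      ut x t = uxx x t + a t * ux x t)
    (ha : ∀ t ∈ Icc (t0 - r ^ 2) t0, |a t| ≤ A)
    (hu : ∀ x ∈ Icc (x0 - r) (x0 + r), ∀ t ∈ Icc (t0 - r ^ 2) t0, |u x t| ≤ M) :
    |uxx x0 t0| ≤ 16 * M * (3 + 2 * A) ^ 2 / r ^ 2 := by
  set ρ := r / 4 with hρ
  have hρ0 : 0 < ρ := by positivity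
  set G := M * (3 + 2 * A) / ρ with hG
  have hG0 : 0 < G := by positivity
  -- gradient bound on the smaller cylinder
  have hgr : ∀ x ∈ Icc (x0 - 3 * ρ) (x0 + 3 * ρ), ∀ t ∈ Icc (t0 - ρ ^ 2) t0, |ux x t| ≤ G := by
    intro x hx t ht
    have s1 : Icc (x - ρ) (x + ρ) ⊆ Icc (x0 - r) (x0 + r) :=
      Icc_subset_Icc (by linarith [hx.1]) (by linarith [hx.2])
    have s2 : Icc (t - ρ ^ 2) t ⊆ Icc (t0 - r ^ 2) t0 :=
      Icc_subset_Icc (by nlinarith [ht.1]) (by linarith [ht.2])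
    refine (bdy_grad u ux uxx ut a x t ρ A M hρ0 hA hM (hc.mono (prod_mono s1 s2))
      (fun y hy s hs => hux y (s1 hy) s (s2 hs)) (fun y hy s hs => huxx y (s1 hy) s (s2 hs))
      (fun y hy s hs => hut y (s1 hy) s (s2 hs)) (fun y hy s hs => hpde y (s1 hy) s (s2 hs))
      (fun s hs => ha s (s2 hs)) (fun y hy s hs => hu y (s1 hy) s (s2 hs))).trans ?_
    rw [hG]
    have : 3 + 2 * A * ρ ≤ 3 + 2 * A := by nlinarith
    gcongr M * ?_ / ρ
  have hquot : ∀ h ∈ Ioo 0 ρ, |(ux (x0 + h) t0 - ux x0 t0) / h| ≤ G * (3 + 2 * A) / ρ := by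
    intro h hh
    have hh0 : 0 < h := hh.1
    have m1 : ∀ x ∈ Icc (x0 - ρ) (x0 + ρ), x ∈ Icc (x0 - r) (x0 + r) := fun x hx =>
      ⟨by linarith [hx.1], by linarith [hx.2]⟩
    have m2 : ∀ x ∈ Icc (x0 - ρ) (x0 + ρ), x + h ∈ Icc (x0 - r) (x0 + r) := fun x hx =>
      ⟨by linarith [hx.1], by linarith [hx.2, hh.2]⟩
    have s2 : Icc (t0 - ρ ^ 2) t0 ⊆ Icc (t0 - r ^ 2) t0 :=
      Icc_subset_Icc (by nlinarith) le_rfl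
    have := bdy_grad (fun x t => (u (x + h) t - u x t) / h) (fun x t => (ux (x + h) t - ux x t) / h)
      (fun x t => (uxx (x + h) t - uxx x t) / h) (fun x t => (ut (x + h) t - ut x t) / h)
      a x0 t0 ρ A G hρ0 hA hG0 ?_ ?_ ?_ ?_ ?_ (fun s hs => ha s (s2 hs)) ?_
    · refine this.trans ?_
      have : 3 + 2 * A * ρ ≤ 3 + 2 * A := by nlinarith
      gcongr G * ?_ / ρ
    · refine ContinuousOn.div_const (ContinuousOn.sub ?_ ?_) h
      · refine hc.comp (f := fun p : ℝ × ℝ => (p.1 + h, p.2)) (by fun_prop) ?_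
        rintro ⟨x, t⟩ ⟨h1, h2⟩
        exact ⟨m2 x h1, s2 h2⟩
      · refine hc.mono ?_
        rintro ⟨x, t⟩ ⟨h1, h2⟩
        exact ⟨m1 x h1, s2 h2⟩
    · intro x hx t ht
      exact ((HasDerivAt.comp_add_const x h (hux _ (m2 x hx) t (s2 ht))).sub
        (hux _ (m1 x hx) t (s2 ht))).div_const h
    · intro x hx t ht
      exact ((HasDerivAt.comp_add_const x h (huxx _ (m2 x hx) t (s2 ht))).sub
        (huxx _ (m1 x hx) t (s2 ht))).div_const h
    · intro x hx t ht
      exact ((hut _ (m2 x hx) t (s2 ht)).sub (hut _ (m1 x hx) t (s2 ht))).div_const h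
    · intro x hx t ht
      rw [hpde _ (m2 x hx) t (s2 ht), hpde _ (m1 x hx) t (s2 ht)]
      ring
    · intro x hx t ht
      obtain ⟨c, hc, hc2⟩ := exists_hasDerivAt_eq_slope (fun w => u w t) (fun w => ux w t)
        (show x < x + h by linarith)
        (fun y hy => (hux y ⟨by linarith [hy.1, hx.1], by linarith [hy.2, hx.2, hh.2]⟩ t
          (s2 ht)).continuousAt.continuousWithinAt)
        (fun y hy => hux y ⟨by linarith [hy.1, hx.1], by linarith [hy.2, hx.2, hh.2]⟩ t (s2 ht))
      have e : x + h - x = h := by ring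
      rw [e] at hc2
      rw [← hc2]
      exact hgr c ⟨by linarith [hc.1, hx.1], by linarith [hc.2, hx.2, hh.2]⟩ t ht
  have hlim : Tendsto (fun h => (ux (x0 + h) t0 - ux x0 t0) / h) (nhdsWithin 0 (Ioi 0))
      (nhds (uxx x0 t0)) := by
    have := (huxx x0 ⟨by linarith, by linarith⟩ t0 ⟨by nlinarith, le_rfl⟩)
    have := this.tendsto_slope_zero_right
    refine this.congr ?_
    intro h
    rw [smul_eq_mul, div_eq_inv_mul]
  have := le_of_tendsto hlim.abs (show ∀ᶠ h in nhdsWithin 0 (Ioi 0), _ ≤ G * (3 + 2 * A) / ρ by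
    filter_upwards [Ioo_mem_nhdsGT hρ0] with h hh using hquot h hh)
  refine this.trans (le_of_eq ?_)
  rw [hG, hρ]
  field_simp
  ring

/-- Bundled hypotheses: a positive pointwise solution with unit mass and mean `μ`. -/
structure BDYSol (μ : ℝ) (f ft fv fvv : ℝ → ℝ → ℝ) : Prop where
  cont : ContinuousOn (fun p : ℝ × ℝ => f p.1 p.2) (Ici 0 ×ˢ Ici 0)
  dv : ∀ v t : ℝ, 0 ≤ v → 0 ≤ t → HasDerivAt (fun w => f w t) (fv v t) v
  dvv : ∀ v t : ℝ, 0 ≤ v → 0 ≤ t → HasDerivAt (fun w => fv w t) (fvv v t) v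
  dt : ∀ v t : ℝ, 0 ≤ v → 0 ≤ t → HasDerivAt (fun s => f v s) (ft v t) t
  pos : ∀ v t : ℝ, 0 ≤ v → 0 ≤ t → 0 < f v t
  int : ∀ t : ℝ, 0 ≤ t → IntegrableOn (fun v => f v t) (Ioi 0)
  intv : ∀ t : ℝ, 0 ≤ t → IntegrableOn (fun v => v * f v t) (Ioi 0)
  mass : ∀ t : ℝ, 0 ≤ t → ∫ v in Ioi (0:ℝ), f v t = 1
  mean : ∀ t : ℝ, 0 ≤ t → ∫ v in Ioi (0:ℝ), v * f v t = μ
  pde : ∀ v t : ℝ, 0 < v → 0 ≤ t → ft v t = fvv v t + f 0 t * fv v t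

lemma BDYSol.local_est {μ : ℝ} {f ft fv fvv : ℝ → ℝ → ℝ} (S : BDYSol μ f ft fv fvv)
    {x0 t0 r A M K : ℝ} (hr : 0 < r) (hr1 : r ≤ 1) (hA : 0 ≤ A) (hK : K = 3 + 2 * A)
    (hx : 0 < x0 - r) (ht : 0 ≤ t0 - r ^ 2)
    (ha : ∀ t ∈ Icc (t0 - r ^ 2) t0, f 0 t ≤ A)
    (hu : ∀ x ∈ Icc (x0 - r) (x0 + r), ∀ t ∈ Icc (t0 - r ^ 2) t0, f x t ≤ M) :
    |fv x0 t0| ≤ K * M / r ∧ |fvv x0 t0| ≤ 16 * K ^ 2 * M / r ^ 2 ∧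
      |ft x0 t0| ≤ 17 * K ^ 2 * M / r ^ 2 := by
  have px : ∀ x ∈ Icc (x0 - r) (x0 + r), 0 < x := fun x h => lt_of_lt_of_le hx h.1
  have pt : ∀ t ∈ Icc (t0 - r ^ 2) t0, 0 ≤ t := fun t h => ht.trans h.1
  have hr2 : 0 < r ^ 2 := by positivity
  have hx0 : x0 ∈ Icc (x0 - r) (x0 + r) := ⟨by linarith, by linarith⟩
  have ht0 : t0 ∈ Icc (t0 - r ^ 2) t0 := ⟨by linarith, le_rfl⟩
  have hM : 0 < M := (S.pos x0 t0 (px _ hx0).le (pt _ ht0)).trans_le (hu _ hx0 _ ht0)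
  have hc : ContinuousOn (fun p : ℝ × ℝ => f p.1 p.2)
      (Icc (x0 - r) (x0 + r) ×ˢ Icc (t0 - r ^ 2) t0) :=
    S.cont.mono (prod_mono (fun x h => (px x h).le) (fun t h => pt t h))
  have ha' : ∀ t ∈ Icc (t0 - r ^ 2) t0, |f 0 t| ≤ A := fun t h => by
    rw [abs_of_pos (S.pos 0 t le_rfl (pt t h))]; exact ha t h
  have hu' : ∀ x ∈ Icc (x0 - r) (x0 + r), ∀ t ∈ Icc (t0 - r ^ 2) t0, |f x t| ≤ M :=
    fun x h t h' => by rw [abs_of_pos (S.pos x t (px x h).le (pt t h'))]; exact hu x h t h'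
  have g1 := bdy_grad f fv fvv ft (fun t => f 0 t) x0 t0 r A M hr hA hM hc
    (fun x h t h' => S.dv x t (px x h).le (pt t h')) (fun x h t h' => S.dvv x t (px x h).le (pt t h'))
    (fun x h t h' => S.dt x t (px x h).le (pt t h')) (fun x h t h' => S.pde x t (px x h) (pt t h'))
    ha' hu'
  have g2 := bdy_hess f fv fvv ft (fun t => f 0 t) x0 t0 r A M hr hr1 hA hM hc
    (fun x h t h' => S.dv x t (px x h).le (pt t h')) (fun x h t h' => S.dvv x t (px x h).le (pt t h'))
    (fun x h t h' => S.dt x t (px x h).le (pt t h')) (fun x h t h' => S.pde x t (px x h) (pt t h'))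
    ha' hu'
  have g1' : |fv x0 t0| ≤ K * M / r := by
    refine g1.trans ?_
    have : 3 + 2 * A * r ≤ K := by rw [hK]; nlinarith
    rw [mul_comm K M]
    gcongr M * ?_ / r
  have g2' : |fvv x0 t0| ≤ 16 * K ^ 2 * M / r ^ 2 := by
    refine g2.trans (le_of_eq ?_)
    rw [hK]; ring
  refine ⟨g1', g2', ?_⟩
  have hK0 : 0 < K := by rw [hK]; linarith
  rw [S.pde x0 t0 (px _ hx0) (pt _ ht0)]
  have h1 : |f 0 t0 * fv x0 t0| ≤ K ^ 2 * M / r ^ 2 := by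
    rw [abs_mul]
    calc |f 0 t0| * |fv x0 t0| ≤ K * (K * M / r) :=
          mul_le_mul ((ha' _ ht0).trans (by rw [hK]; linarith)) g1' (abs_nonneg _) hK0.le
      _ = K ^ 2 * M / r := by ring
      _ ≤ K ^ 2 * M / r ^ 2 := by
          apply div_le_div_of_nonneg_left (by positivity) hr2
          nlinarith
  calc _ ≤ _ := abs_add_le _ _
    _ ≤ 16 * K ^ 2 * M / r ^ 2 + K ^ 2 * M / r ^ 2 := add_le_add g2' h1
    _ = _ := by ring

lemma bdy_mvt {g g' : ℝ → ℝ} {x y C : ℝ} (hxy : x ≤ y)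
    (hg : ∀ z ∈ Icc x y, HasDerivAt g (g' z) z) (hC : ∀ z ∈ Icc x y, |g' z| ≤ C) :
    |g y - g x| ≤ C * (y - x) := by
  have := (convex_Icc x y).norm_image_sub_le_of_norm_hasDerivWithin_le
    (fun z hz => (hg z hz).hasDerivWithinAt) hC (left_mem_Icc.2 hxy) (right_mem_Icc.2 hxy)
  rwa [Real.norm_eq_abs, Real.norm_eq_abs, abs_of_nonneg (show 0 ≤ y - x by linarith)] at this

set_option maxHeartbeats 1000000 in
lemma BDYSol.sup_est {μ : ℝ} {f ft fv fvv : ℝ → ℝ → ℝ} (S : BDYSol μ f ft fv fvv)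
    {v0 t0 A K : ℝ} (hA : 0 ≤ A) (hK : K = 3 + 2 * A) (hv0 : 1 < v0) (ht0 : 1 ≤ t0)
    (ha : ∀ t ∈ Icc (t0 - 1) t0, f 0 t ≤ A) :
    ∀ x ∈ Icc (v0 - 1 / 2) (v0 + 1 / 2), ∀ t ∈ Icc (t0 - 1 / 2) t0,
      f x t ≤ 16 * (5000 * K ^ 2) ^ 2 *
        ∫ p in Icc (v0 - 1) (v0 + 1) ×ˢ Icc (t0 - 1) t0, f p.1 p.2 := by
  have hK3 : 3 ≤ K := by rw [hK]; linarith
  set Q : Set (ℝ × ℝ) := Icc (v0 - 1) (v0 + 1) ×ˢ Icc (t0 - 1) t0 with hQ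
  have hQc : IsCompact Q := isCompact_Icc.prod isCompact_Icc
  have hQs : Q ⊆ Ici 0 ×ˢ Ici 0 := by
    rintro ⟨x, t⟩ ⟨h1, h2⟩
    exact ⟨le_trans (by linarith) h1.1, le_trans (by linarith) h2.1⟩
  have hfc : ContinuousOn (fun p : ℝ × ℝ => f p.1 p.2) Q := S.cont.mono hQs
  have hfi : IntegrableOn (fun p : ℝ × ℝ => f p.1 p.2) Q := hfc.integrableOn_compact hQc
  have hpos : ∀ p ∈ Q, 0 < f p.1 p.2 := fun p hp => S.pos _ _ (hQs hp).1 (hQs hp).2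
  set ρ : ℝ × ℝ → ℝ := fun p => min (1 - |p.1 - v0|) (p.2 - t0 + 1) with hρ
  have hρ0 : ∀ p ∈ Q, 0 ≤ ρ p := by
    rintro ⟨x, t⟩ ⟨h1, h2⟩
    refine le_min ?_ (by linarith [h2.1])
    have : |x - v0| ≤ 1 := abs_le.2 ⟨by linarith [h1.1], by linarith [h1.2]⟩
    simpa using this
  obtain ⟨⟨x, s⟩, hP, hmax⟩ := hQc.exists_isMaxOn (f := fun p => ρ p ^ 3 * f p.1 p.2)
    ⟨(v0, t0), ⟨by linarith, by linarith⟩, ⟨by linarith, le_rfl⟩⟩ (by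
      refine ContinuousOn.mul ?_ hfc
      simp only [hρ]
      fun_prop)
  have hmax' : ∀ q ∈ Q, ρ q ^ 3 * f q.1 q.2 ≤ ρ (x, s) ^ 3 * f x s := fun q hq => hmax hq
  set d := ρ (x, s) with hd
  have hfP : 0 < f x s := hpos _ hP
  have hd0 : 0 < d := by
    rcases (hρ0 _ hP).lt_or_eq with h | h
    · exact h
    · exfalso
      have := hmax' (v0, t0) ⟨⟨by linarith, by linarith⟩, ⟨by linarith, le_rfl⟩⟩
      rw [hd, ← h] at this
      have e : ρ (v0, t0) = 1 := by simp [hρ]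
      rw [e] at this
      have := S.pos v0 t0 (by linarith) (by linarith)
      simp at *
      linarith
  have hdx : |x - v0| ≤ 1 - d := by have : d ≤ 1 - |x - v0| := min_le_left _ _
                                    linarith
  have hds : d ≤ s - t0 + 1 := min_le_right _ _
  have hd1 : d ≤ 1 := by linarith [abs_nonneg (x - v0)]
  have hxl := abs_le.1 hdx
  have hst : s ≤ t0 := hP.2.2
  have hdd : d ^ 2 ≤ d := by nlinarith
  have hd2 : 0 < d ^ 2 := by positivity
  -- points in the half cylinder
  have hhalf : ∀ y r, y ∈ Icc (x - d / 2) (x + d / 2) → r ∈ Icc (s - d ^ 2 / 4) s →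
      (y, r) ∈ Q ∧ f y r ≤ 8 * f x s := by
    intro y r hy hr
    have hq : (y, r) ∈ Q := ⟨⟨by linarith [hy.1], by linarith [hy.2]⟩,
      ⟨by linarith [hr.1], by linarith [hr.2]⟩⟩
    refine ⟨hq, ?_⟩
    have h1 : d / 2 ≤ ρ (y, r) := by
      refine le_min ?_ ?_
      · have : |y - v0| ≤ 1 - d / 2 := abs_le.2 ⟨by linarith [hy.1], by linarith [hy.2]⟩
        show d / 2 ≤ 1 - |y - v0|
        linarith
      · show d / 2 ≤ r - t0 + 1
        linarith [hr.1]
    have h2 := hmax' _ hq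
    simp only at h2
    have h3 : (d / 2) ^ 3 ≤ ρ (y, r) ^ 3 := by gcongr
    have h4 : (d / 2) ^ 3 * f y r ≤ d ^ 3 * f x s :=
      (mul_le_mul_of_nonneg_right h3 (hpos _ hq).le).trans h2
    have h5 : d ^ 3 * f y r ≤ d ^ 3 * (8 * f x s) := by nlinarith
    exact le_of_mul_le_mul_left h5 (by positivity)
  -- derivative bounds in the quarter cylinder
  have hquart : ∀ y r, y ∈ Icc (x - d / 4) (x + d / 4) → r ∈ Icc (s - d ^ 2 / 16) s →
      |fv y r| ≤ 32 * K * f x s / d ∧ |ft y r| ≤ 2176 * K ^ 2 * f x s / d ^ 2 := by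
    intro y r hy hr
    have hb : ∀ z ∈ Icc (y - d / 4) (y + d / 4), z ∈ Icc (x - d / 2) (x + d / 2) := fun z hz =>
      ⟨by linarith [hz.1, hy.1], by linarith [hz.2, hy.2]⟩
    have hb2 : ∀ z ∈ Icc (r - (d / 4) ^ 2) r, z ∈ Icc (s - d ^ 2 / 4) s := fun z hz =>
      ⟨by nlinarith [hz.1, hr.1], by linarith [hz.2, hr.2]⟩
    have := S.local_est (x0 := y) (t0 := r) (r := d / 4) (A := A) (M := 8 * f x s) (K := K)
      (by positivity) (by linarith) hA hK (by linarith [hy.1]) (by nlinarith [hr.1])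
      (fun t ht => ha t ⟨by nlinarith [(hb2 t ht).1], by linarith [(hb2 t ht).2]⟩)
      (fun z hz t ht => (hhalf z t (hb z hz) (hb2 t ht)).2)
    refine ⟨this.1.trans (le_of_eq ?_), this.2.2.trans (le_of_eq ?_)⟩
    · field_simp; ring
    · field_simp; ring
  set κ := 1 / (5000 * K ^ 2) with hκ
  have hκ0 : 0 < κ := by positivity
  have hκK : κ * K ^ 2 = 1 / 5000 := by rw [hκ]; field_simp
  have hκ1 : κ ≤ 1 / 5000 := by nlinarith
  have hκK1 : κ * K ≤ 1 / 5000 := by nlinarith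
  set q : Set (ℝ × ℝ) := Icc x (x + κ * d) ×ˢ Icc (s - κ * d ^ 2) s with hq
  have hκd : κ * d ≤ d / 4 := by nlinarith
  have hκd2 : κ * d ^ 2 ≤ d ^ 2 / 16 := by nlinarith
  have hlow : ∀ p ∈ q, f x s / 2 ≤ f p.1 p.2 := by
    rintro ⟨y, r⟩ ⟨⟨h1, h2⟩, ⟨h3, h4⟩⟩
    simp only at h1 h2 h3 h4 ⊢
    have e1 : |f x s - f x r| ≤ 2176 * K ^ 2 * f x s / d ^ 2 * (s - r) := by
      refine bdy_mvt (g := fun z => f x z) (g' := fun z => ft x z) h4 (fun z hz => ?_) (fun z hz => ?_)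
      · exact S.dt x z (by linarith) (by nlinarith [hz.1])
      · exact (hquart x z ⟨by linarith, by linarith⟩ ⟨by linarith [hz.1], hz.2⟩).2
    have e2 : |f y r - f x r| ≤ 32 * K * f x s / d * (y - x) := by
      refine bdy_mvt (g := fun z => f z r) (g' := fun z => fv z r) h1 (fun z hz => ?_) (fun z hz => ?_)
      · exact S.dv z r (by linarith [hz.1]) (by nlinarith)
      · exact (hquart z r ⟨by linarith [hz.1], by linarith [hz.2]⟩ ⟨by linarith, h4⟩).1
    have e3 : 2176 * K ^ 2 * f x s / d ^ 2 * (s - r) ≤ 2176 / 5000 * f x s := by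
      calc _ ≤ 2176 * K ^ 2 * f x s / d ^ 2 * (κ * d ^ 2) := by gcongr; linarith
        _ = 2176 * (κ * K ^ 2) * f x s := by field_simp
        _ = _ := by rw [hκK]; ring
    have e4 : 32 * K * f x s / d * (y - x) ≤ 32 / 5000 * f x s := by
      calc _ ≤ 32 * K * f x s / d * (κ * d) := by gcongr; linarith
        _ = 32 * (κ * K) * f x s := by field_simp
        _ ≤ 32 * (1 / 5000) * f x s := by gcongr
        _ = _ := by ring
    have := abs_le.1 e1
    have := abs_le.1 e2
    linarith
  have hqQ : q ⊆ Q := by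
    rintro ⟨y, r⟩ ⟨⟨h1, h2⟩, ⟨h3, h4⟩⟩
    exact (hhalf y r ⟨by linarith, by linarith⟩ ⟨by linarith, h4⟩).1
  have hvol : volume.real q = κ * d * (κ * d ^ 2) := by
    rw [hq, Measure.volume_eq_prod, measureReal_prod_prod, Real.volume_real_Icc_of_le (by nlinarith),
      Real.volume_real_Icc_of_le (by nlinarith)]
    ring
  have hqm : MeasurableSet q := measurableSet_Icc.prod measurableSet_Icc
  have hI : f x s / 2 * (κ * d * (κ * d ^ 2)) ≤ ∫ p in Q, f p.1 p.2 := by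
    calc f x s / 2 * (κ * d * (κ * d ^ 2)) = ∫ p in q, f x s / 2 := by
          rw [setIntegral_const, hvol, smul_eq_mul]; ring
      _ ≤ ∫ p in q, f p.1 p.2 := by
          refine setIntegral_mono_on ?_ (hfi.mono_set hqQ) hqm hlow
          refine integrableOn_const ?_
          exact ((isCompact_Icc.prod isCompact_Icc).measure_lt_top).ne
      _ ≤ ∫ p in Q, f p.1 p.2 := by
          refine setIntegral_mono_set hfi ?_ (LE.le.eventuallyLE hqQ)
          refine (ae_restrict_iff' (measurableSet_Icc.prod measurableSet_Icc)).2 (ae_of_all _ ?_)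
          exact fun p hp => (hpos p hp).le
  have hN : d ^ 3 * f x s ≤ 2 * (5000 * K ^ 2) ^ 2 * ∫ p in Q, f p.1 p.2 := by
    have : d ^ 3 * f x s = 2 * (5000 * K ^ 2) ^ 2 * (f x s / 2 * (κ * d * (κ * d ^ 2))) := by
      rw [hκ]; field_simp
    rw [this]
    exact mul_le_mul_of_nonneg_left hI (by positivity)
  intro y hy r hr
  have hyr : (y, r) ∈ Q := ⟨⟨by linarith [hy.1], by linarith [hy.2]⟩, ⟨by linarith [hr.1], hr.2⟩⟩
  have h1 : 1 / 2 ≤ ρ (y, r) := by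
    refine le_min ?_ ?_
    · have : |y - v0| ≤ 1 / 2 := abs_le.2 ⟨by linarith [hy.1], by linarith [hy.2]⟩
      show 1 / 2 ≤ 1 - |y - v0|
      linarith
    · show 1 / 2 ≤ r - t0 + 1
      linarith [hr.1]
  have h2 := hmax' _ hyr
  simp only at h2
  have h3 : (1 / 2 : ℝ) ^ 3 ≤ ρ (y, r) ^ 3 := by gcongr
  have h4 := (mul_le_mul_of_nonneg_right h3 (hpos _ hyr).le).trans h2
  simp only at h4
  linarith

lemma BDYSol.glaeser {μ : ℝ} {f ft fv fvv : ℝ → ℝ → ℝ} (S : BDYSol μ f ft fv fvv)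
    {v0 t0 A K : ℝ} (hA : 0 ≤ A) (hK : K = 3 + 2 * A) (hv0 : 1 < v0) (ht0 : 1 ≤ t0)
    (ha : ∀ t ∈ Icc (t0 - 1) t0, f 0 t ≤ A) :
    fv v0 t0 ^ 2 / f v0 t0 ≤ 1024 * K ^ 2 * (16 * (5000 * K ^ 2) ^ 2) *
        ∫ p in Icc (v0 - 1) (v0 + 1) ×ˢ Icc (t0 - 1) t0, f p.1 p.2 := by
  have hsup := S.sup_est hA hK hv0 ht0 ha
  set M := 16 * (5000 * K ^ 2) ^ 2 * ∫ p in Icc (v0 - 1) (v0 + 1) ×ˢ Icc (t0 - 1) t0, f p.1 p.2 with hM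
  have hK3 : 3 ≤ K := by rw [hK]; linarith
  have hf0 := S.pos v0 t0 (by linarith) (by linarith)
  have hM0 : 0 < M := hf0.trans_le
    (hsup v0 ⟨by linarith, by linarith⟩ t0 ⟨by linarith, le_rfl⟩)
  have hloc : ∀ y ∈ Icc (v0 - 1 / 4) (v0 + 1 / 4), |fv y t0| ≤ 4 * K * M ∧
      |fvv y t0| ≤ 256 * K ^ 2 * M := by
    intro y hy
    have := S.local_est (x0 := y) (t0 := t0) (r := 1 / 4) (A := A) (M := M) (K := K)
      (by norm_num) (by norm_num) hA hK (by linarith [hy.1]) (by linarith)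
      (fun t ht => ha t ⟨by linarith [ht.1], ht.2⟩)
      (fun z hz t ht => hsup z ⟨by linarith [hz.1, hy.1], by linarith [hz.2, hy.2]⟩ t
        ⟨by linarith [ht.1], ht.2⟩)
    refine ⟨this.1.trans (le_of_eq (by ring)), this.2.1.trans (le_of_eq (by ring))⟩
  set B := 256 * K ^ 2 * M with hB
  have hB0 : 0 < B := by positivity
  have hfvb := (hloc v0 ⟨by linarith, by linarith⟩).1
  set g := fv v0 t0 with hg
  set h := - g / (2 * B) with hh
  have hhb : |h| ≤ 1 / 4 := by
    rw [hh, abs_div, abs_neg, abs_of_pos (show 0 < 2 * B by positivity), div_le_iff₀ (by positivity)]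
    refine hfvb.trans ?_
    rw [hB]
    have : 0 ≤ M * K * (K - 3) := mul_nonneg (by positivity) (by linarith)
    nlinarith
  have hhb' := abs_le.1 hhb
  have hfvlip : ∀ y ∈ Icc (v0 - |h|) (v0 + |h|), |fv y t0 - g| ≤ B * |h| := by
    intro y hy
    have := (convex_Icc (v0 - |h|) (v0 + |h|)).norm_image_sub_le_of_norm_hasDerivWithin_le
      (f := fun z => fv z t0) (f' := fun z => fvv z t0) (C := B) (x := v0) (y := y)
      (fun z hz => (S.dvv z t0 (by linarith [hz.1]) (by linarith)).hasDerivWithinAt)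
      (fun z hz => (hloc z ⟨by linarith [hz.1], by linarith [hz.2]⟩).2)
      ⟨by linarith [abs_nonneg h], by linarith [abs_nonneg h]⟩ hy
    simp only [Real.norm_eq_abs] at this
    refine this.trans ?_
    exact mul_le_mul_of_nonneg_left
      (abs_le.2 ⟨by linarith [hy.1], by linarith [hy.2]⟩) hB0.le
  have htay : |f (v0 + h) t0 - f v0 t0 - g * h| ≤ B * |h| * |h| := by
    have := (convex_Icc (v0 - |h|) (v0 + |h|)).norm_image_sub_le_of_norm_hasDerivWithin_le
      (f := fun z => f z t0 - g * z) (f' := fun z => fv z t0 - g) (C := B * |h|) (x := v0) (y := v0 + h)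
      (fun z hz => ((S.dv z t0 (by linarith [hz.1]) (by linarith)).sub
        (((hasDerivAt_id z).const_mul g).congr_deriv (mul_one g))).hasDerivWithinAt)
      (fun z hz => hfvlip z hz)
      ⟨by linarith [abs_nonneg h], by linarith [abs_nonneg h]⟩
      ⟨by linarith [neg_abs_le h], by linarith [le_abs_self h]⟩
    simp only [Real.norm_eq_abs] at this
    have e1 : f (v0 + h) t0 - g * (v0 + h) - (f v0 t0 - g * v0) = f (v0 + h) t0 - f v0 t0 - g * h := by
      ring
    have e2 : v0 + h - v0 = h := by ring
    rwa [e1, e2] at this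
  have hfp := S.pos (v0 + h) t0 (by linarith) (by linarith)
  have h2 := (abs_le.1 htay).2
  rw [mul_assoc, abs_mul_abs_self] at h2
  have h3 : g * h + B * (h * h) = - (g ^ 2 / (4 * B)) := by
    rw [hh]; field_simp; ring
  have h4 : g ^ 2 / (4 * B) ≤ f v0 t0 := by linarith
  rw [div_le_iff₀ (by positivity)] at h4
  rw [div_le_iff₀ hf0]
  calc g ^ 2 ≤ f v0 t0 * (4 * B) := h4
    _ = _ := by rw [hB, hM]; ring

lemma BDYSol.cont0 {μ : ℝ} {f ft fv fvv : ℝ → ℝ → ℝ} (S : BDYSol μ f ft fv fvv) :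
    ContinuousOn (fun t => f 0 t) (Ici 0) :=
  fun t ht => (S.dt 0 t le_rfl ht).continuousAt.continuousWithinAt

lemma BDYSol.bound0 {μ : ℝ} {f ft fv fvv : ℝ → ℝ → ℝ} (S : BDYSol μ f ft fv fvv)
    {s t : ℝ} (hs : 0 ≤ s) : ∃ A, 0 ≤ A ∧ ∀ r ∈ Icc s t, f 0 r ≤ A := by
  obtain ⟨C, hC⟩ := isCompact_Icc.exists_bound_of_continuousOn
    (S.cont0.mono (fun r (hr : r ∈ Icc s t) => hs.trans hr.1))
  exact ⟨max C 0, le_max_right _ _, fun r hr =>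
    ((le_abs_self _).trans (hC r hr)).trans (le_max_left _ _)⟩

lemma BDYSol.lint {μ : ℝ} {f ft fv fvv : ℝ → ℝ → ℝ} (S : BDYSol μ f ft fv fvv)
    {t : ℝ} (ht : 1 ≤ t) :
    ∫⁻ v in Ioi (1:ℝ), ENNReal.ofReal
      (∫ p in Icc (v - 1) (v + 1) ×ˢ Icc (t - 1) t, f p.1 p.2) ≤ 2 := by
  classical
  set R : Set (ℝ × ℝ) := Ici 0 ×ˢ Icc (t - 1) t with hR
  have hRm : MeasurableSet R := measurableSet_Ici.prod measurableSet_Icc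
  have hRs : R ⊆ Ici 0 ×ˢ Ici 0 := prod_mono le_rfl (fun s hs => by
    simp only [mem_Ici]; linarith [hs.1])
  set F : ℝ × ℝ → ENNReal := R.indicator (fun p => ENNReal.ofReal (f p.1 p.2)) with hF
  have hFm : Measurable F := by
    have h1 : Measurable (R.piecewise (fun p : ℝ × ℝ => f p.1 p.2) (fun _ => 0)) :=
      ContinuousOn.measurable_piecewise (S.cont.mono hRs) continuousOn_const hRm
    have h2 := h1.ennreal_ofReal
    convert h2 using 2 with p
    rw [hF]
    by_cases hp : p ∈ R
    · simp [hp]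
    · simp [hp]
  have hFint : ∫⁻ p, F p ≤ 1 := by
    rw [Measure.volume_eq_prod, lintegral_prod_symm _ hFm.aemeasurable]
    calc ∫⁻ s, ∫⁻ x, F (x, s) = ∫⁻ s, (Icc (t - 1) t).indicator (fun _ => 1) s := by
          refine lintegral_congr fun s => ?_
          by_cases hs : s ∈ Icc (t - 1) t
          · have hs0 : 0 ≤ s := by linarith [hs.1]
            have : ∀ x, F (x, s) = (Ici 0).indicator (fun x => ENNReal.ofReal (f x s)) x := by
              intro x
              by_cases hx : x ∈ Ici (0:ℝ)
              · have : (x, s) ∈ R := ⟨hx, hs⟩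
                rw [hF, indicator_of_mem this, indicator_of_mem hx]
              · have : (x, s) ∉ R := fun h => hx h.1
                rw [hF, indicator_of_notMem this, indicator_of_notMem hx]
            simp_rw [this]
            rw [lintegral_indicator measurableSet_Ici, indicator_of_mem hs,
              Measure.restrict_congr_set Ioi_ae_eq_Ici.symm, ← ofReal_integral_eq_lintegral_ofReal (S.int s hs0),
              S.mass s hs0, ENNReal.ofReal_one]
            refine (ae_restrict_iff' measurableSet_Ioi).2 (ae_of_all _ fun x hx => ?_)
            exact (S.pos x s (le_of_lt hx) hs0).le
          · rw [indicator_of_notMem hs]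
            have : ∀ x, F (x, s) = 0 := fun x => by
              rw [hF]; exact indicator_of_notMem (fun h => hs h.2) _
            simp [this]
      _ ≤ 1 := by
          rw [lintegral_indicator measurableSet_Icc]
          simp
  set E : Set (ℝ × ℝ × ℝ) := {z | |z.2.1 - z.1| ≤ 1} with hE
  have hEm : MeasurableSet E := by
    have : IsClosed E := isClosed_le (by fun_prop) continuous_const
    exact this.measurableSet
  have hGm : Measurable (fun z : ℝ × ℝ × ℝ => E.indicator (fun z => F z.2) z) :=
    (hFm.comp measurable_snd).indicator hEm
  calc ∫⁻ v in Ioi (1:ℝ), ENNReal.ofReal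
        (∫ p in Icc (v - 1) (v + 1) ×ˢ Icc (t - 1) t, f p.1 p.2)
      ≤ ∫⁻ v in Ioi (1:ℝ), ∫⁻ p, E.indicator (fun z => F z.2) (v, p) := by
        refine setLIntegral_mono' measurableSet_Ioi fun v hv => ?_
        have hv1 : 1 < v := hv
        set Q : Set (ℝ × ℝ) := Icc (v - 1) (v + 1) ×ˢ Icc (t - 1) t with hQ
        have hQR : Q ⊆ R := prod_mono (fun x hx => by
          simp only [mem_Ici]; linarith [hx.1]) le_rfl
        have hQm : MeasurableSet Q := measurableSet_Icc.prod measurableSet_Icc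
        have hfi : IntegrableOn (fun p : ℝ × ℝ => f p.1 p.2) Q :=
          (S.cont.mono (hQR.trans hRs)).integrableOn_compact (isCompact_Icc.prod isCompact_Icc)
        rw [ofReal_integral_eq_lintegral_ofReal hfi, ← lintegral_indicator hQm]
        · refine lintegral_mono fun p => ?_
          by_cases hp : p ∈ Q
          · have h1 : (v, p) ∈ E := show |p.1 - v| ≤ 1 from abs_le.2 ⟨by linarith [hp.1.1], by linarith [hp.1.2]⟩
            rw [indicator_of_mem hp, indicator_of_mem h1, hF, indicator_of_mem (hQR hp)]
          · rw [indicator_of_notMem hp]; exact zero_le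
        · refine (ae_restrict_iff' hQm).2 (ae_of_all _ fun p hp => ?_)
          exact (S.pos _ _ (hRs (hQR hp)).1 (hRs (hQR hp)).2).le
    _ ≤ ∫⁻ v, ∫⁻ p, E.indicator (fun z => F z.2) (v, p) := setLIntegral_le_lintegral _ _
    _ = ∫⁻ p, ∫⁻ v, E.indicator (fun z => F z.2) (v, p) :=
        lintegral_lintegral_swap hGm.aemeasurable
    _ = ∫⁻ p, 2 * F p := by
        refine lintegral_congr fun p => ?_
        have : ∀ v, E.indicator (fun z => F z.2) (v, p) =
            (Icc (p.1 - 1) (p.1 + 1)).indicator (fun _ => F p) v := by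
          intro v
          by_cases hv : v ∈ Icc (p.1 - 1) (p.1 + 1)
          · have h1 : (v, p) ∈ E := show |p.1 - v| ≤ 1 from abs_le.2 ⟨by linarith [hv.2], by linarith [hv.1]⟩
            rw [indicator_of_mem hv, indicator_of_mem h1]
          · have h1 : (v, p) ∉ E := fun (h : |p.1 - v| ≤ 1) => hv
              ⟨by linarith [(abs_le.1 h).2], by linarith [(abs_le.1 h).1]⟩
            rw [indicator_of_notMem hv, indicator_of_notMem h1]
        simp_rw [this]
        rw [lintegral_indicator measurableSet_Icc, setLIntegral_const, Real.volume_Icc,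
          show p.1 + 1 - (p.1 - 1) = 2 by ring, mul_comm]
        norm_num
    _ = 2 * ∫⁻ p, F p := lintegral_const_mul _ hFm
    _ ≤ 2 * 1 := by gcongr
    _ = 2 := by norm_num

lemma BDYSol.dcont {μ : ℝ} {f ft fv fvv : ℝ → ℝ → ℝ} (S : BDYSol μ f ft fv fvv)
    {t : ℝ} (ht : 0 ≤ t) :
    ContinuousOn (fun v => (fv v t + f 0 t * f v t) ^ 2 / f v t) (Ici 0) := by
  have h1 : ContinuousOn (fun v => f v t) (Ici 0) :=
    fun v hv => (S.dv v t hv ht).continuousAt.continuousWithinAt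
  have h2 : ContinuousOn (fun v => fv v t) (Ici 0) :=
    fun v hv => (S.dvv v t hv ht).continuousAt.continuousWithinAt
  exact ((h2.add (continuousOn_const.mul h1)).pow 2).div h1 (fun v hv => ne_of_gt (S.pos v t hv ht))

/-- The entropy dissipation integrand is genuinely integrable. -/
lemma BDYSol.dint {μ : ℝ} {f ft fv fvv : ℝ → ℝ → ℝ} (S : BDYSol μ f ft fv fvv)
    {t : ℝ} (ht : 1 ≤ t) :
    IntegrableOn (fun v => (fv v t + f 0 t * f v t) ^ 2 / f v t) (Ioi 0) := by
  have ht0 : 0 ≤ t := by linarith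
  obtain ⟨A, hA, ha⟩ := S.bound0 (s := t - 1) (t := t) (by linarith)
  set K := 3 + 2 * A with hK
  set C := 1024 * K ^ 2 * (16 * (5000 * K ^ 2) ^ 2) with hC
  have hC0 : 0 ≤ C := by positivity
  have hc := S.dcont ht0
  have h1 : IntegrableOn (fun v => (fv v t + f 0 t * f v t) ^ 2 / f v t) (Ioc 0 1) :=
    ((hc.mono (fun v hv => hv.1)).integrableOn_compact (isCompact_Icc (a := 0) (b := 1))).mono_set
      Ioc_subset_Icc_self
  have hfisher : IntegrableOn (fun v => fv v t ^ 2 / f v t) (Ioi 1) := by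
    have hm : AEStronglyMeasurable (fun v => fv v t ^ 2 / f v t) (volume.restrict (Ioi 1)) := by
      refine ContinuousOn.aestronglyMeasurable ?_ measurableSet_Ioi
      refine ContinuousOn.div (ContinuousOn.pow ?_ 2) ?_ ?_
      · exact fun v hv => (S.dvv v t (zero_le_one.trans (le_of_lt hv)) ht0).continuousAt.continuousWithinAt
      · exact fun v hv => (S.dv v t (zero_le_one.trans (le_of_lt hv)) ht0).continuousAt.continuousWithinAt
      · exact fun v hv => (S.pos v t (zero_le_one.trans (le_of_lt hv)) ht0).ne'
    refine ⟨hm, ?_⟩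
    rw [hasFiniteIntegral_iff_ofReal]
    · calc ∫⁻ v in Ioi (1:ℝ), ENNReal.ofReal (fv v t ^ 2 / f v t)
          ≤ ∫⁻ v in Ioi (1:ℝ), ENNReal.ofReal C * ENNReal.ofReal
            (∫ p in Icc (v - 1) (v + 1) ×ˢ Icc (t - 1) t, f p.1 p.2) := by
            refine setLIntegral_mono' measurableSet_Ioi fun v hv => ?_
            rw [← ENNReal.ofReal_mul hC0]
            exact ENNReal.ofReal_le_ofReal (S.glaeser hA hK hv ht ha)
        _ = ENNReal.ofReal C * ∫⁻ v in Ioi (1:ℝ), ENNReal.ofReal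
            (∫ p in Icc (v - 1) (v + 1) ×ˢ Icc (t - 1) t, f p.1 p.2) :=
            lintegral_const_mul' _ _ ENNReal.ofReal_ne_top
        _ ≤ ENNReal.ofReal C * 2 := by gcongr; exact S.lint ht
        _ < ⊤ := ENNReal.mul_lt_top ENNReal.ofReal_lt_top (by norm_num)
    · refine (ae_restrict_iff' measurableSet_Ioi).2 (ae_of_all _ fun x hx => ?_)
      exact div_nonneg (sq_nonneg _) (S.pos x t (zero_le_one.trans (le_of_lt hx)) ht0).le
  have h2 : IntegrableOn (fun v => (fv v t + f 0 t * f v t) ^ 2 / f v t) (Ioi 1) := by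
    have hfi : IntegrableOn (fun v => f v t) (Ioi 1) :=
      (S.int t ht0).mono_set (Ioi_subset_Ioi zero_le_one)
    refine Integrable.mono' ((hfisher.const_mul 2).add (hfi.const_mul (2 * f 0 t ^ 2))) ?_ ?_
    · exact (hc.mono (show Ioi (1:ℝ) ⊆ Ici 0 from fun v hv => mem_Ici.2 (le_trans zero_le_one (le_of_lt (mem_Ioi.1 hv))))).aestronglyMeasurable
        measurableSet_Ioi
    · refine (ae_restrict_iff' measurableSet_Ioi).2 (ae_of_all _ fun x hx => ?_)
      have hp := S.pos x t (zero_le_one.trans (le_of_lt hx)) ht0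
      rw [Real.norm_of_nonneg (by positivity)]
      simp only [Pi.add_apply]
      rw [div_le_iff₀ hp]
      have : (2 * (fv x t ^ 2 / f x t) + 2 * f 0 t ^ 2 * f x t) * f x t
          = 2 * fv x t ^ 2 + 2 * (f 0 t * f x t) ^ 2 := by field_simp
      rw [this]
      nlinarith [sq_nonneg (fv x t - f 0 t * f x t)]
  rw [← Ioc_union_Ioi_eq_Ioi zero_le_one]
  exact h1.union h2

lemma BDYSol.loc_bound {μ : ℝ} {f ft fv fvv : ℝ → ℝ → ℝ} (S : BDYSol μ f ft fv fvv)
    {α β t : ℝ} (hα : 0 < α) (ht : 1 ≤ t) :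
    ∃ C, ∀ v ∈ Icc α β, ∀ s ∈ Icc (t - 1 / 2) (t + 1 / 2), |fvv v s| ≤ C ∧ |ft v s| ≤ C := by
  obtain ⟨A, hA, ha⟩ := S.bound0 (s := t - 1) (t := t + 1 / 2) (by linarith)
  obtain ⟨M, hM⟩ := (isCompact_Icc.prod isCompact_Icc).exists_bound_of_continuousOn
    (S.cont.mono (show Icc (α / 2) (β + 1) ×ˢ Icc (t - 1) (t + 1 / 2) ⊆ Ici 0 ×ˢ Ici 0 from
      prod_mono (fun x hx => le_trans (by linarith) hx.1) (fun x hx => le_trans (by linarith) hx.1)))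
  set r := min (α / 2) (1 / 2) with hr
  have hr0 : 0 < r := lt_min (by linarith) (by norm_num)
  have hr1 : r ≤ α / 2 := min_le_left _ _
  have hr2 : r ≤ 1 / 2 := min_le_right _ _
  have hrr : r ^ 2 ≤ 1 / 4 := by nlinarith
  refine ⟨17 * (3 + 2 * A) ^ 2 * M / r ^ 2, fun v hv s hs => ?_⟩
  have hbd : ∀ x ∈ Icc (v - r) (v + r), ∀ τ ∈ Icc (s - r ^ 2) s, f x τ ≤ M := fun x hx τ hτ =>
    (le_abs_self _).trans (hM (x, τ) ⟨⟨by linarith [hx.1, hv.1], by linarith [hx.2, hv.2]⟩,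
      ⟨by linarith [hτ.1, hs.1], by linarith [hτ.2, hs.2]⟩⟩)
  have h := S.local_est (x0 := v) (t0 := s) (r := r) (A := A) (M := M) (K := 3 + 2 * A) hr0
    (by linarith) hA rfl (by linarith [hv.1]) (by linarith [hs.1])
    (fun τ hτ => ha τ ⟨by linarith [hτ.1, hs.1], by linarith [hτ.2, hs.2]⟩) hbd
  refine ⟨h.2.1.trans ?_, h.2.2⟩
  have hM0 : 0 ≤ M := (S.pos v s (by linarith [hv.1]) (by linarith [hs.1])).le.trans
    (hbd v ⟨by linarith, by linarith⟩ s ⟨by nlinarith, le_rfl⟩)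
  gcongr
  norm_num

lemma BDYSol.weak_deriv {μ : ℝ} {f ft fv fvv : ℝ → ℝ → ℝ} (S : BDYSol μ f ft fv fvv)
    {φ φ1 φ2 : ℝ → ℝ} {α β t : ℝ} (hα : 0 < α) (hαβ : α ≤ β) (ht : 1 ≤ t)
    (h1 : ∀ v, HasDerivAt φ (φ1 v) v) (h2 : ∀ v, HasDerivAt φ1 (φ2 v) v) (h3 : Continuous φ2)
    (ha0 : φ α = 0) (ha1 : φ1 α = 0) (hb0 : φ β = 0) (hb1 : φ1 β = 0) :
    HasDerivAt (fun s => ∫ v in α..β, φ v * f v s)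
      (∫ v in α..β, (φ2 v - f 0 t * φ1 v) * f v t) t := by
  obtain ⟨C, hC⟩ := S.loc_bound (β := β) hα ht
  have hφc : Continuous φ := continuous_iff_continuousAt.2 fun v => (h1 v).continuousAt
  have hφ1c : Continuous φ1 := continuous_iff_continuousAt.2 fun v => (h2 v).continuousAt
  have hu : uIcc α β = Icc α β := uIcc_of_le hαβ
  have huo : uIoc α β = Ioc α β := uIoc_of_le hαβ
  have hfc : ∀ s, 0 ≤ s → ContinuousOn (fun v => f v s) (uIcc α β) := fun s hs v hv =>
    (S.dv v s (by rw [hu] at hv; linarith [hv.1]) hs).continuousAt.continuousWithinAt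
  have hfvc : ContinuousOn (fun v => fv v t) (uIcc α β) := fun v hv =>
    (S.dvv v t (by rw [hu] at hv; linarith [hv.1]) (by linarith)).continuousAt.continuousWithinAt
  have hfvvm : AEStronglyMeasurable (fun v => fvv v t) (volume.restrict (uIoc α β)) := by
    have : AEStronglyMeasurable (deriv (fun w => fv w t)) (volume.restrict (uIoc α β)) :=
      (measurable_deriv _).aestronglyMeasurable
    refine this.congr ?_
    rw [huo]
    refine (ae_restrict_iff' measurableSet_Ioc).2 (ae_of_all _ fun v hv => ?_)
    exact (S.dvv v t (by linarith [hv.1]) (by linarith)).deriv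
  have hfvvi : IntervalIntegrable (fun v => fvv v t) volume α β := by
    rw [intervalIntegrable_iff]
    rw [huo] at hfvvm ⊢
    refine Integrable.of_bound hfvvm C ?_
    refine (ae_restrict_iff' measurableSet_Ioc).2 (ae_of_all _ fun v hv => ?_)
    exact (hC v ⟨hv.1.le, hv.2⟩ t ⟨by linarith, by linarith⟩).1
  have hfvi : IntervalIntegrable (fun v => fv v t) volume α β := hfvc.intervalIntegrable
  have hfi : IntervalIntegrable (fun v => f v t) volume α β := (hfc t (by linarith)).intervalIntegrable
  have hftm : AEStronglyMeasurable (fun v => φ v * ft v t) (volume.restrict (uIoc α β)) := by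
    have : AEStronglyMeasurable (fun v => φ v * (fvv v t + f 0 t * fv v t))
        (volume.restrict (uIoc α β)) :=
      hφc.aestronglyMeasurable.mul (hfvvm.add
        (((intervalIntegrable_iff.1 hfvi).aestronglyMeasurable).const_mul _))
    refine this.congr ?_
    rw [huo]
    refine (ae_restrict_iff' measurableSet_Ioc).2 (ae_of_all _ fun v hv => ?_)
    simp only
    rw [S.pde v t (by linarith [hv.1]) (by linarith)]
  have key := (intervalIntegral.hasDerivAt_integral_of_dominated_loc_of_deriv_le
    (F := fun s v => φ v * f v s) (F' := fun s v => φ v * ft v s) (x₀ := t) (a := α) (b := β)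
    (μ := volume) (bound := fun v => |φ v| * C) (s := Ioo (t - 1 / 2) (t + 1 / 2))
    (Ioo_mem_nhds (by linarith) (by linarith)) ?_ ?_ hftm ?_ ?_ ?_).2
  · refine key.congr_deriv ?_
    have e1 : ∫ v in α..β, φ v * fvv v t = - ∫ v in α..β, φ1 v * fv v t := by
      rw [intervalIntegral.integral_mul_deriv_eq_deriv_mul (u := φ) (v := fun v => fv v t)
        (fun v _ => h1 v) (fun v hv => S.dvv v t (by rw [hu] at hv; linarith [hv.1]) (by linarith))
        (hφ1c.intervalIntegrable _ _) hfvvi, ha0, hb0]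
      ring
    have e2 : ∫ v in α..β, φ1 v * fv v t = - ∫ v in α..β, φ2 v * f v t := by
      rw [intervalIntegral.integral_mul_deriv_eq_deriv_mul (u := φ1) (v := fun v => f v t)
        (fun v _ => h2 v) (fun v hv => S.dv v t (by rw [hu] at hv; linarith [hv.1]) (by linarith))
        (h3.intervalIntegrable _ _) hfvi, ha1, hb1]
      ring
    have e3 : ∫ v in α..β, φ v * fv v t = - ∫ v in α..β, φ1 v * f v t := by
      rw [intervalIntegral.integral_mul_deriv_eq_deriv_mul (u := φ) (v := fun v => f v t)
        (fun v _ => h1 v) (fun v hv => S.dv v t (by rw [hu] at hv; linarith [hv.1]) (by linarith))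
        (hφ1c.intervalIntegrable _ _) hfvi, ha0, hb0]
      ring
    have e4 : ∫ v in α..β, φ v * ft v t
        = ∫ v in α..β, (φ v * fvv v t + f 0 t * (φ v * fv v t)) := by
      refine intervalIntegral.integral_congr fun v hv => ?_
      rw [hu] at hv
      beta_reduce
      rw [S.pde v t (by linarith [hv.1]) (by linarith)]
      ring
    have e5 : ∫ v in α..β, (φ2 v - f 0 t * φ1 v) * f v t
        = ∫ v in α..β, (φ2 v * f v t - f 0 t * (φ1 v * f v t)) := by
      refine intervalIntegral.integral_congr fun v hv => ?_
      ring
    rw [e4, e5, intervalIntegral.integral_add (hfvvi.continuousOn_mul hφc.continuousOn)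
      ((hfvi.continuousOn_mul hφc.continuousOn).const_mul _),
      intervalIntegral.integral_sub (hfi.continuousOn_mul h3.continuousOn)
      ((hfi.continuousOn_mul hφ1c.continuousOn).const_mul _),
      intervalIntegral.integral_const_mul, intervalIntegral.integral_const_mul, e1, e2, e3]
    ring
  · filter_upwards [Ioo_mem_nhds (show t - 1 / 2 < t by linarith) (show t < t + 1 / 2 by linarith)]
      with s hs
    exact (intervalIntegrable_iff.1 (((hfc s (by linarith [hs.1])).intervalIntegrable).continuousOn_mul
      hφc.continuousOn)).aestronglyMeasurable
  · exact hfi.continuousOn_mul hφc.continuousOn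
  · refine ae_of_all _ fun v hv s hs => ?_
    rw [huo] at hv
    rw [Real.norm_eq_abs, abs_mul]
    exact mul_le_mul_of_nonneg_left (hC v ⟨hv.1.le, hv.2⟩ s ⟨hs.1.le, hs.2.le⟩).2 (abs_nonneg _)
  · exact (hφc.abs.mul continuous_const).intervalIntegrable _ _
  · refine ae_of_all _ fun v hv s hs => ?_
    rw [huo] at hv
    exact (S.dt v s (by linarith [hv.1]) (by linarith [hs.1])).const_mul _

/-- A smooth cutoff together with its first two derivatives. -/
lemma bdy_cutoff : ∃ (η η1 η2 : ℝ → ℝ) (E : ℝ), (∀ x, HasDerivAt η (η1 x) x) ∧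
    (∀ x, HasDerivAt η1 (η2 x) x) ∧ Continuous η2 ∧ (∀ x, 0 ≤ η x) ∧ (∀ x, η x ≤ 1) ∧
    (∀ x, x ≤ 1 → η x = 1) ∧ (∀ x, 2 ≤ x → η x = 0) ∧ (∀ x, x ≤ 1 → η1 x = 0) ∧
    (∀ x, 2 ≤ x → η1 x = 0) ∧ (∀ x, x ≤ 1 → η2 x = 0) ∧
    (∀ x, 2 ≤ x → η2 x = 0) ∧ 0 ≤ E ∧ (∀ x, |η1 x| ≤ E) ∧
    (∀ x, |η2 x| ≤ E) := by
  set η : ℝ → ℝ := fun x => Real.smoothTransition (2 - x) with hη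
  have hs : ContDiff ℝ 2 η := Real.smoothTransition.contDiff.comp (contDiff_const.sub contDiff_id)
  have hs1 : ContDiff ℝ 1 (deriv η) := by
    have : ContDiff ℝ (1 + 1) η := by norm_num; exact hs
    exact (contDiff_succ_iff_deriv.1 this).2.2
  have hd : Differentiable ℝ η := hs.differentiable (by norm_num)
  have hd1 : Differentiable ℝ (deriv η) := hs1.differentiable (by norm_num)
  have hc1 : Continuous (deriv η) := hs1.continuous
  have hc2 : Continuous (deriv (deriv η)) := hs1.continuous_deriv le_rfl
  have hone : ∀ x, x ≤ 1 → η x = 1 := fun x hx => Real.smoothTransition.one_of_one_le (by linarith)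
  have hzero : ∀ x, 2 ≤ x → η x = 0 := fun x hx => Real.smoothTransition.zero_of_nonpos (by linarith)
  -- a continuously differentiable function constant on a ray has zero derivative there
  have left0 : ∀ (g : ℝ → ℝ) (c : ℝ), Continuous (deriv g) → (∀ x, x ≤ 1 → g x = c) →
      ∀ x, x ≤ 1 → deriv g x = 0 := by
    intro g c hg hgc
    have h1 : EqOn (deriv g) (fun _ => 0) (Iio 1) := by
      intro x hx
      have : g =ᶠ[nhds x] fun _ => c := by
        filter_upwards [Iio_mem_nhds hx] with y hy using hgc y (le_of_lt hy)
      simpa using this.deriv_eq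
    have h2 := h1.closure hg continuous_const
    rw [closure_Iio] at h2
    exact fun x hx => h2 hx
  have right0 : ∀ (g : ℝ → ℝ) (c : ℝ), Continuous (deriv g) → (∀ x, 2 ≤ x → g x = c) →
      ∀ x, 2 ≤ x → deriv g x = 0 := by
    intro g c hg hgc
    have h1 : EqOn (deriv g) (fun _ => 0) (Ioi 2) := by
      intro x hx
      have : g =ᶠ[nhds x] fun _ => c := by
        filter_upwards [Ioi_mem_nhds hx] with y hy using hgc y (le_of_lt hy)
      simpa using this.deriv_eq
    have h2 := h1.closure hg continuous_const
    rw [closure_Ioi] at h2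
    exact fun x hx => h2 hx
  have l1 := left0 η 1 hc1 hone
  have r1 := right0 η 0 hc1 hzero
  have l2 := left0 (deriv η) 0 hc2 l1
  have r2 := right0 (deriv η) 0 hc2 r1
  obtain ⟨E1, hE1⟩ := (isCompact_Icc (a := (1:ℝ)) (b := 2)).exists_bound_of_continuousOn hc1.continuousOn
  obtain ⟨E2, hE2⟩ := (isCompact_Icc (a := (1:ℝ)) (b := 2)).exists_bound_of_continuousOn hc2.continuousOn
  have hb : ∀ (g : ℝ → ℝ) (E' : ℝ), (∀ x ∈ Icc (1:ℝ) 2, ‖g x‖ ≤ E') → (∀ x, x ≤ 1 → g x = 0) →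
      (∀ x, 2 ≤ x → g x = 0) → ∀ x, |g x| ≤ max (max E1 E2) (max E' 0) := by
    intro g E' h1 h2 h3 x
    rcases le_or_gt x 1 with h | h
    · rw [h2 x h, abs_zero]; exact le_max_of_le_right (le_max_right _ _)
    · rcases le_or_gt 2 x with h' | h'
      · rw [h3 x h', abs_zero]; exact le_max_of_le_right (le_max_right _ _)
      · exact (h1 x ⟨h.le, h'.le⟩).trans (le_max_of_le_right (le_max_left _ _))
  refine ⟨η, deriv η, deriv (deriv η), max (max E1 E2) (max (max E1 E2) 0),
    fun x => (hd x).hasDerivAt, fun x => (hd1 x).hasDerivAt,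
    hc2, fun x => Real.smoothTransition.nonneg _, fun x => Real.smoothTransition.le_one _, hone, hzero,
    l1, r1, l2, r2, le_max_of_le_right (le_max_right _ _), ?_, ?_⟩
  · exact hb _ _ (fun x hx => (hE1 x hx).trans (le_max_left _ _)) l1 r1
  · exact hb _ _ (fun x hx => (hE2 x hx).trans (le_max_right _ _)) l2 r2

lemma BDYSol.int_bdd {μ : ℝ} {f ft fv fvv : ℝ → ℝ → ℝ} (S : BDYSol μ f ft fv fvv)
    {g : ℝ → ℝ} {C t : ℝ} (ht : 0 ≤ t) (hg : Continuous g) (hb : ∀ v, 0 < v → |g v| ≤ C) :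
    IntegrableOn (fun v => g v * f v t) (Ioi 0) := by
  refine Integrable.mono' ((S.int t ht).const_mul C)
    (hg.aestronglyMeasurable.mul (S.int t ht).aestronglyMeasurable) ?_
  refine (ae_restrict_iff' measurableSet_Ioi).2 (ae_of_all _ fun v hv => ?_)
  rw [Real.norm_eq_abs, abs_mul, abs_of_pos (S.pos v t (le_of_lt hv) ht)]
  exact mul_le_mul_of_nonneg_right (hb v hv) (S.pos v t (le_of_lt hv) ht).le

lemma BDYSol.int_lin {μ : ℝ} {f ft fv fvv : ℝ → ℝ → ℝ} (S : BDYSol μ f ft fv fvv)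
    {g : ℝ → ℝ} {C t : ℝ} (ht : 0 ≤ t) (hg : Continuous g) (hb : ∀ v, 0 < v → |g v| ≤ C * v) :
    IntegrableOn (fun v => g v * f v t) (Ioi 0) := by
  refine Integrable.mono' ((S.intv t ht).const_mul C)
    (hg.aestronglyMeasurable.mul (S.int t ht).aestronglyMeasurable) ?_
  refine (ae_restrict_iff' measurableSet_Ioi).2 (ae_of_all _ fun v hv => ?_)
  rw [Real.norm_eq_abs, abs_mul, abs_of_pos (S.pos v t (le_of_lt hv) ht), ← mul_assoc]
  exact mul_le_mul_of_nonneg_right (hb v hv) (S.pos v t (le_of_lt hv) ht).le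

lemma bdy_lin_bound {φ φ1 : ℝ → ℝ} {C : ℝ} (h1 : ∀ v, HasDerivAt φ (φ1 v) v)
    (h0 : φ 0 = 0) (hb : ∀ v, |φ1 v| ≤ C) : ∀ v, 0 ≤ v → |φ v| ≤ C * v := by
  intro v hv
  have := Convex.norm_image_sub_le_of_norm_hasDerivWithin_le (f := φ) (f' := φ1) (s := univ)
    (x := 0) (y := v) (C := C) (fun x _ => (h1 x).hasDerivWithinAt) (fun x _ => hb x) convex_univ
    (mem_univ _) (mem_univ _)
  simpa [h0, abs_of_nonneg hv] using this

lemma BDYSol.weak_le_cut {μ : ℝ} {f ft fv fvv : ℝ → ℝ → ℝ} (S : BDYSol μ f ft fv fvv)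
    {φ φ1 φ2 B b η η1 η2 : ℝ → ℝ} {δ C E A L s T : ℝ} (hδ : 0 < δ) (hC : 0 ≤ C)
    (hE : 0 ≤ E) (hA : 0 ≤ A) (hL : 1 ≤ L) (hLδ : δ ≤ L) (hs : 1 ≤ s) (hsT : s ≤ T)
    (h1 : ∀ v, HasDerivAt φ (φ1 v) v) (h2 : ∀ v, HasDerivAt φ1 (φ2 v) v) (h3 : Continuous φ2)
    (hz : ∀ v, v ≤ δ → φ v = 0) (hz1 : ∀ v, v ≤ δ → φ1 v = 0) (hz2 : ∀ v, v ≤ δ → φ2 v = 0)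
    (hb1 : ∀ v, |φ1 v| ≤ C) (hb2 : ∀ v, |φ2 v| ≤ C)
    (he : ∀ x, HasDerivAt η (η1 x) x) (he1 : ∀ x, HasDerivAt η1 (η2 x) x) (he2 : Continuous η2)
    (hη0 : ∀ x, 0 ≤ η x) (hη1 : ∀ x, η x ≤ 1)
    (ho : ∀ x, x ≤ 1 → η x = 1) (hr : ∀ x, 2 ≤ x → η x = 0) (ho1 : ∀ x, x ≤ 1 → η1 x = 0)
    (hr1 : ∀ x, 2 ≤ x → η1 x = 0) (ho2 : ∀ x, x ≤ 1 → η2 x = 0)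
    (hr2 : ∀ x, 2 ≤ x → η2 x = 0)
    (hE1 : ∀ x, |η1 x| ≤ E) (hE2 : ∀ x, |η2 x| ≤ E)
    (hA0 : ∀ t ∈ Icc s T, f 0 t ≤ A)
    (hB : ∀ t ∈ Icc s T, HasDerivAt B (b t) t)
    (hle : ∀ t ∈ Icc s T, ∫ v in Ioi (0:ℝ), (φ2 v - f 0 t * φ1 v) * f v t ≤ b t) :
    (∫ v in Ioi (0:ℝ), (φ v * η (v / L)) * f v T) - B T ≤
      (∫ v in Ioi (0:ℝ), (φ v * η (v / L)) * f v s) - B s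
        + (C * (1 + A) + 3 * C * E + A * C * E) * μ / L * (T - s) := by
  have hL0 : 0 < L := by linarith
  set K := C * (1 + A) + 3 * C * E + A * C * E with hK
  have hφc : Continuous φ := continuous_iff_continuousAt.2 fun v => (h1 v).continuousAt
  have hφ1c : Continuous φ1 := continuous_iff_continuousAt.2 fun v => (h2 v).continuousAt
  have hηc : Continuous η := continuous_iff_continuousAt.2 fun v => (he v).continuousAt
  have hη1c : Continuous η1 := continuous_iff_continuousAt.2 fun v => (he1 v).continuousAt
  have hφb := bdy_lin_bound h1 (hz 0 hδ.le) hb1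
  set ψ : ℝ → ℝ := fun v => φ v * η (v / L) with hψ
  set ψ1 : ℝ → ℝ := fun v => φ1 v * η (v / L) + φ v * (η1 (v / L) * (1 / L)) with hψ1
  set ψ2 : ℝ → ℝ := fun v => (φ2 v * η (v / L) + φ1 v * (η1 (v / L) * (1 / L))) +
    (φ1 v * (η1 (v / L) * (1 / L)) + φ v * ((η2 (v / L) * (1 / L)) * (1 / L))) with hψ2
  have hdl : ∀ v, HasDerivAt (fun v => v / L) (1 / L) v := fun v => (hasDerivAt_id v).div_const L
  have dη : ∀ v, HasDerivAt (fun v => η (v / L)) (η1 (v / L) * (1 / L)) v := fun v =>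
    (he (v / L)).comp v (hdl v)
  have dη1 : ∀ v, HasDerivAt (fun v => η1 (v / L)) (η2 (v / L) * (1 / L)) v := fun v =>
    (he1 (v / L)).comp v (hdl v)
  have d1 : ∀ v, HasDerivAt ψ (ψ1 v) v := fun v => (h1 v).mul (dη v)
  have d2 : ∀ v, HasDerivAt ψ1 (ψ2 v) v := fun v =>
    ((h2 v).mul (dη v)).add ((h1 v).mul ((dη1 v).mul_const _))
  have c2 : Continuous ψ2 := by
    simp only [hψ2]; fun_prop
  have c1 : Continuous ψ1 := continuous_iff_continuousAt.2 fun v => (d2 v).continuousAt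
  have c0 : Continuous ψ := continuous_iff_continuousAt.2 fun v => (d1 v).continuousAt
  have big : ∀ v, 2 * L ≤ v → 2 ≤ v / L := fun v hv => by rw [le_div_iff₀ hL0]; exact hv
  have conv : ∀ g : ℝ → ℝ, (∀ v, v ≤ δ → g v = 0) → (∀ v, 2 * L ≤ v → g v = 0) →
      ∫ v in δ..(2 * L), g v = ∫ v in Ioi (0:ℝ), g v := by
    intro g hg1 hg2
    rw [intervalIntegral.integral_of_le (by linarith)]
    symm
    refine setIntegral_eq_of_subset_of_forall_diff_eq_zero measurableSet_Ioi
      (fun v hv => lt_trans hδ hv.1) (fun v hv => ?_)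
    rcases le_or_gt v δ with h | h
    · exact hg1 v h
    · exact hg2 v (by
        by_contra hh
        exact hv.2 ⟨h, (not_le.1 hh).le⟩)
  have z0 : ∀ v, v ≤ δ → ψ v = 0 := fun v hv => by simp [hψ, hz v hv]
  have z1 : ∀ v, v ≤ δ → ψ1 v = 0 := fun v hv => by simp [hψ1, hz v hv, hz1 v hv]
  have z2 : ∀ v, v ≤ δ → ψ2 v = 0 := fun v hv => by simp [hψ2, hz v hv, hz1 v hv, hz2 v hv]
  have y0 : ∀ v, 2 * L ≤ v → ψ v = 0 := fun v hv => by simp [hψ, hr _ (big v hv)]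
  have y1 : ∀ v, 2 * L ≤ v → ψ1 v = 0 := fun v hv => by
    simp [hψ1, hr _ (big v hv), hr1 _ (big v hv)]
  have y2 : ∀ v, 2 * L ≤ v → ψ2 v = 0 := fun v hv => by
    simp [hψ2, hr _ (big v hv), hr1 _ (big v hv), hr2 _ (big v hv)]
  have err : ∀ t ∈ Icc s T, ∀ v, 0 < v →
      |(ψ2 v - f 0 t * ψ1 v) - (φ2 v - f 0 t * φ1 v)| ≤ K / L * v := by
    intro t ht v hv
    have hK0 : 0 ≤ K := by positivity
    rcases le_or_gt v L with h | h
    · have : v / L ≤ 1 := by rw [div_le_one hL0]; exact h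
      simp only [hψ1, hψ2, ho _ this, ho1 _ this, ho2 _ this]
      have : (φ2 v * 1 + φ1 v * (0 * (1 / L)) + (φ1 v * (0 * (1 / L)) + φ v * (0 * (1 / L) * (1 / L))) -
        f 0 t * (φ1 v * 1 + φ v * (0 * (1 / L))) - (φ2 v - f 0 t * φ1 v)) = 0 := by ring
      rw [this, abs_zero]; positivity
    · have hw : 1 ≤ v / L := by rw [le_div_iff₀ hL0]; linarith
      have ha := (S.pos 0 t le_rfl (by linarith [ht.1])).le
      have haA := hA0 t ht
      have e : (ψ2 v - f 0 t * ψ1 v) - (φ2 v - f 0 t * φ1 v) =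
          (φ2 v - f 0 t * φ1 v) * (η (v / L) - 1) + 2 * φ1 v * η1 (v / L) * (1 / L)
          + (φ v * (1 / L)) * η2 (v / L) * (1 / L) - f 0 t * (φ v * (1 / L)) * η1 (v / L) := by
        simp only [hψ1, hψ2]; ring
      have hi : 1 / L ≤ 1 := by rw [div_le_one hL0]; exact hL
      have hi0 : 0 ≤ 1 / L := by positivity
      have hf1 : |φ v * (1 / L)| ≤ C * (v / L) := by
        rw [abs_mul, abs_of_nonneg hi0]
        calc |φ v| * (1 / L) ≤ (C * v) * (1 / L) := by gcongr; exact hφb v hv.le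
          _ = _ := by ring
      have t1 : |(φ2 v - f 0 t * φ1 v) * (η (v / L) - 1)| ≤ C * (1 + A) := by
        rw [abs_mul]
        have : |φ2 v - f 0 t * φ1 v| ≤ C * (1 + A) := by
          calc |φ2 v - f 0 t * φ1 v| ≤ |φ2 v| + |f 0 t * φ1 v| := abs_sub _ _
            _ ≤ C + A * C := by
              rw [abs_mul, abs_of_nonneg ha]
              exact add_le_add (hb2 v) (mul_le_mul haA (hb1 v) (abs_nonneg _) hA)
            _ = _ := by ring
        have h' : |η (v / L) - 1| ≤ 1 := by
          rw [abs_le]; constructor <;> linarith [hη0 (v / L), hη1 (v / L)]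
        calc _ ≤ C * (1 + A) * 1 := mul_le_mul this h' (abs_nonneg _) (by positivity)
          _ = _ := by ring
      have t2 : |2 * φ1 v * η1 (v / L) * (1 / L)| ≤ 2 * C * E := by
        rw [abs_mul, abs_mul, abs_mul, abs_of_nonneg hi0, abs_two]
        calc 2 * |φ1 v| * |η1 (v / L)| * (1 / L) ≤ 2 * C * E * 1 := by
              gcongr
              · exact hb1 v
              · exact hE1 _
          _ = _ := by ring
      have t3 : |(φ v * (1 / L)) * η2 (v / L) * (1 / L)| ≤ C * (v / L) * E := by
        rw [abs_mul, abs_mul, abs_of_nonneg hi0]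
        calc _ ≤ C * (v / L) * E * 1 := by
              gcongr
              exact hE2 _
          _ = _ := by ring
      have t4 : |f 0 t * (φ v * (1 / L)) * η1 (v / L)| ≤ A * (C * (v / L)) * E := by
        rw [abs_mul, abs_mul, abs_of_nonneg ha]
        gcongr
        exact hE1 _
      rw [e]
      have hsum := (abs_sub ((φ2 v - f 0 t * φ1 v) * (η (v / L) - 1) + 2 * φ1 v * η1 (v / L) * (1 / L)
          + (φ v * (1 / L)) * η2 (v / L) * (1 / L)) (f 0 t * (φ v * (1 / L)) * η1 (v / L)))
      have hsum2 := (abs_add_le ((φ2 v - f 0 t * φ1 v) * (η (v / L) - 1) + 2 * φ1 v * η1 (v / L) * (1 / L))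
          ((φ v * (1 / L)) * η2 (v / L) * (1 / L)))
      have hsum3 := (abs_add_le ((φ2 v - f 0 t * φ1 v) * (η (v / L) - 1))
        (2 * φ1 v * η1 (v / L) * (1 / L)))
      have hfin : C * (1 + A) + 2 * C * E ≤ (C * (1 + A) + 2 * C * E) * (v / L) := by
        have : 0 ≤ C * (1 + A) + 2 * C * E := by positivity
        nlinarith
      have : K / L * v = (C * (1 + A) + 2 * C * E) * (v / L) + C * (v / L) * E
        + A * (C * (v / L)) * E := by rw [hK]; ring
      rw [this]
      linarith
  have hder : ∀ t ∈ Icc s T, ∫ v in δ..(2 * L), (ψ2 v - f 0 t * ψ1 v) * f v t ≤ b t + K * μ / L := by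
    intro t ht
    have ht0 : 0 ≤ t := by linarith [ht.1]
    have ha := (S.pos 0 t le_rfl ht0).le
    rw [conv _ (fun v hv => by simp [z1 v hv, z2 v hv]) (fun v hv => by simp [y1 v hv, y2 v hv])]
    have i1 : IntegrableOn (fun v => (φ2 v - f 0 t * φ1 v) * f v t) (Ioi 0) := by
      refine S.int_bdd (C := C + f 0 t * C) ht0 (by fun_prop) fun v _ => ?_
      refine (abs_sub _ _).trans ?_
      rw [abs_mul, abs_of_nonneg ha]
      gcongr
      · exact hb2 v
      · exact hb1 v
    have i2 : IntegrableOn (fun v => ((ψ2 v - f 0 t * ψ1 v) - (φ2 v - f 0 t * φ1 v)) * f v t) (Ioi 0) :=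
      S.int_lin ht0 (by fun_prop) (err t ht)
    have i3 := (S.intv t ht0).const_mul (K / L)
    have e1 : ∀ v, (ψ2 v - f 0 t * ψ1 v) * f v t = (φ2 v - f 0 t * φ1 v) * f v t +
      ((ψ2 v - f 0 t * ψ1 v) - (φ2 v - f 0 t * φ1 v)) * f v t := fun v => by ring
    simp only [e1]
    rw [integral_add i1 i2]
    have : ∫ v in Ioi (0:ℝ), ((ψ2 v - f 0 t * ψ1 v) - (φ2 v - f 0 t * φ1 v)) * f v t ≤ 
        ∫ v in Ioi (0:ℝ), K / L * (v * f v t) := by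
      refine setIntegral_mono_on i2 i3 measurableSet_Ioi fun v hv => ?_
      rw [← mul_assoc]
      exact mul_le_mul_of_nonneg_right ((le_abs_self _).trans (err t ht v hv))
        (S.pos v t (le_of_lt hv) ht0).le
    rw [integral_const_mul, S.mean t ht0] at this
    have h' := hle t ht
    have : K / L * μ = K * μ / L := by ring
    linarith
  have hF : ∀ t ∈ Icc s T, HasDerivAt (fun t => (∫ v in δ..(2 * L), ψ v * f v t) - B t - K * μ / L * t)
      ((∫ v in δ..(2 * L), (ψ2 v - f 0 t * ψ1 v) * f v t) - b t - K * μ / L * 1) t := fun t ht =>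
    ((S.weak_deriv hδ (by linarith) (by linarith [ht.1]) d1 d2 c2 (z0 _ le_rfl) (z1 _ le_rfl)
      (y0 _ le_rfl) (y1 _ le_rfl)).sub (hB t ht)).sub ((hasDerivAt_id t).const_mul _)
  have anti := antitoneOn_of_deriv_nonpos (convex_Icc s T)
    (fun t ht => (hF t ht).continuousAt.continuousWithinAt)
    (fun t ht => (hF t (interior_subset ht)).differentiableAt.differentiableWithinAt)
    (fun t ht => by
      rw [(hF t (interior_subset ht)).deriv]
      linarith [hder t (interior_subset ht)])
  have h := anti (left_mem_Icc.2 hsT) (right_mem_Icc.2 hsT) hsT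
  simp only at h
  rw [conv _ (fun v hv => by simp [z0 v hv]) (fun v hv => by simp [y0 v hv]),
    conv _ (fun v hv => by simp [z0 v hv]) (fun v hv => by simp [y0 v hv])] at h
  linarith

lemma BDYSol.weak_le {μ : ℝ} {f ft fv fvv : ℝ → ℝ → ℝ} (S : BDYSol μ f ft fv fvv)
    {φ φ1 φ2 B b : ℝ → ℝ} {δ C s T : ℝ} (hδ : 0 < δ) (hC : 0 ≤ C)
    (hs : 1 ≤ s) (hsT : s ≤ T)
    (h1 : ∀ v, HasDerivAt φ (φ1 v) v) (h2 : ∀ v, HasDerivAt φ1 (φ2 v) v) (h3 : Continuous φ2)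
    (hz : ∀ v, v ≤ δ → φ v = 0) (hz1 : ∀ v, v ≤ δ → φ1 v = 0) (hz2 : ∀ v, v ≤ δ → φ2 v = 0)
    (hb1 : ∀ v, |φ1 v| ≤ C) (hb2 : ∀ v, |φ2 v| ≤ C)
    (hB : ∀ t ∈ Icc s T, HasDerivAt B (b t) t)
    (hle : ∀ t ∈ Icc s T, ∫ v in Ioi (0:ℝ), (φ2 v - f 0 t * φ1 v) * f v t ≤ b t) :
    (∫ v in Ioi (0:ℝ), φ v * f v T) - B T ≤ (∫ v in Ioi (0:ℝ), φ v * f v s) - B s := by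
  obtain ⟨η, η1, η2, E, he, he1, he2, hη0, hη1, ho, hr, ho1, hr1, ho2, hr2, hE, hE1, hE2⟩ := bdy_cutoff
  obtain ⟨A, hA, ha⟩ := S.bound0 (s := s) (t := T) (by linarith)
  have hφc : Continuous φ := continuous_iff_continuousAt.2 fun v => (h1 v).continuousAt
  have hηc : Continuous η := continuous_iff_continuousAt.2 fun v => (he v).continuousAt
  have hφb := bdy_lin_bound h1 (hz 0 hδ.le) hb1
  have lim : ∀ t, 0 ≤ t → Tendsto (fun n : ℕ => ∫ v in Ioi (0:ℝ), (φ v * η (v / n)) * f v t) atTop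
      (nhds (∫ v in Ioi (0:ℝ), φ v * f v t)) := by
    intro t ht
    refine tendsto_integral_of_dominated_convergence (fun v => C * (v * f v t)) ?_ ?_ ?_ ?_
    · intro n
      exact (hφc.mul (hηc.comp (continuous_id.div_const _))).aestronglyMeasurable.mul
        (S.int t ht).aestronglyMeasurable
    · exact (S.intv t ht).const_mul C
    · intro n
      refine (ae_restrict_iff' measurableSet_Ioi).2 (ae_of_all _ fun v hv => ?_)
      have hp := (S.pos v t (le_of_lt hv) ht).le
      rw [Real.norm_eq_abs, abs_mul, abs_mul, abs_of_nonneg hp, abs_of_nonneg (hη0 _)]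
      have hv0 : 0 ≤ v := le_of_lt hv
      calc |φ v| * η (v / n) * f v t ≤ (C * v) * 1 * f v t := by
            gcongr
            · exact hη0 _
            · exact hφb v hv0
            · exact hη1 _
        _ = _ := by ring
    · refine (ae_restrict_iff' measurableSet_Ioi).2 (ae_of_all _ fun v hv => ?_)
      refine tendsto_const_nhds.congr' ?_
      filter_upwards [eventually_ge_atTop (⌈v⌉₊ + 1)] with n hn
      have hn' : v ≤ n := (Nat.le_ceil v).trans (by exact_mod_cast (Nat.le_succ _).trans hn)
      have hn0 : (0:ℝ) < n := lt_of_lt_of_le hv hn'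
      rw [ho (v / n) (by rw [div_le_one hn0]; exact hn'), mul_one]
  have hl : Tendsto (fun n : ℕ => (∫ v in Ioi (0:ℝ), (φ v * η (v / n)) * f v s) - B s
        + (C * (1 + A) + 3 * C * E + A * C * E) * μ / n * (T - s)) atTop
      (nhds ((∫ v in Ioi (0:ℝ), φ v * f v s) - B s + 0 * (T - s))) :=
    ((lim s (by linarith)).sub_const _).add
      ((tendsto_const_div_atTop_nhds_zero_nat _).mul_const _)
  rw [zero_mul, add_zero] at hl
  refine le_of_tendsto_of_tendsto ((lim T (by linarith)).sub_const (B T)) hl ?_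
  filter_upwards [eventually_ge_atTop (⌈δ⌉₊ + 1)] with n hn
  have hn' : δ ≤ n := (Nat.le_ceil δ).trans (by exact_mod_cast (Nat.le_succ _).trans hn)
  have hn1 : (1:ℝ) ≤ n := by exact_mod_cast (Nat.le_add_left 1 _).trans hn
  exact S.weak_le_cut hδ hC hE hA hn1 hn' hs hsT h1 h2 h3 hz hz1 hz2 hb1 hb2 he he1 he2 hη0 hη1
    ho hr ho1 hr1 ho2 hr2 hE1 hE2 ha hB hle

/-- A smoothed positive part together with its first two derivatives. -/
lemma bdy_ramp : ∃ (θ θ1 θ2 : ℝ → ℝ) (E : ℝ), (∀ x, HasDerivAt θ (θ1 x) x) ∧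
    (∀ x, HasDerivAt θ1 (θ2 x) x) ∧ Continuous θ2 ∧ (∀ x, 0 ≤ θ1 x) ∧ (∀ x, θ1 x ≤ 1) ∧
    (∀ x, x ≤ 1 → θ x = 0) ∧ (∀ x, x ≤ 1 → θ1 x = 0) ∧ (∀ x, x ≤ 1 → θ2 x = 0) ∧
    (∀ x, 0 ≤ θ x) ∧ (∀ x, 0 ≤ x → θ x ≤ x) ∧ (∀ x, x - 2 ≤ θ x) ∧ 0 ≤ E ∧ (∀ x, |θ2 x| ≤ E) := by
  obtain ⟨η, η1, η2, E, he, he1, he2, hη0, hη1, ho, hr, ho1, hr1, ho2, hr2, hE, hE1, hE2⟩ := bdy_cutoff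
  have hηc : Continuous η := continuous_iff_continuousAt.2 fun v => (he v).continuousAt
  have hη1c : Continuous η1 := continuous_iff_continuousAt.2 fun v => (he1 v).continuousAt
  have hc : Continuous (fun x => 1 - η x) := continuous_const.sub hηc
  set θ : ℝ → ℝ := fun x => ∫ y in (1:ℝ)..x, (1 - η y) with hθ
  have hd : ∀ x, HasDerivAt θ (1 - η x) x := fun x => (hc.integral_hasStrictDerivAt 1 x).hasDerivAt
  have mono : Monotone θ := monotone_of_deriv_nonneg (fun x => (hd x).differentiableAt)
    (fun x => by rw [(hd x).deriv]; linarith [hη1 x])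
  have hd' : ∀ x, HasDerivAt (fun x => x - θ x) (1 - (1 - η x)) x := fun x =>
    (hasDerivAt_id x).sub (hd x)
  have mono' : Monotone (fun x => x - θ x) :=
    monotone_of_deriv_nonneg (fun x => (hd' x).differentiableAt)
    (fun x => by rw [(hd' x).deriv]; linarith [hη0 x])
  have z : ∀ x, x ≤ 1 → θ x = 0 := by
    intro x hx
    rw [hθ]
    simp only
    rw [intervalIntegral.integral_symm, neg_eq_zero]
    refine intervalIntegral.integral_zero_ae (ae_of_all _ fun y hy => ?_)
    rw [uIoc_of_le hx] at hy
    rw [ho y hy.2, sub_self]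
  have lower : ∀ x, x - 2 ≤ θ x := by
    have hn : ∀ x, 0 ≤ θ x := fun x => by
      rcases le_or_gt x 1 with h | h
      · rw [z x h]
      · rw [← z 1 le_rfl]; exact mono h.le
    intro x
    rcases le_or_gt x 2 with h | h
    · linarith [hn x]
    · have he : θ x = θ 2 + ∫ y in (2:ℝ)..x, (1 - η y) := by
        rw [hθ]
        exact (intervalIntegral.integral_add_adjacent_intervals (hc.intervalIntegrable _ _)
          (hc.intervalIntegrable _ _)).symm
      have h2 : ∫ y in (2:ℝ)..x, (1 - η y) = ∫ y in (2:ℝ)..x, (1:ℝ) := by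
        refine intervalIntegral.integral_congr fun y hy => ?_
        rw [uIcc_of_le h.le] at hy

        rw [hr y hy.1, sub_zero]
      rw [he, h2]
      simp
      linarith [hn 2]
  refine ⟨θ, fun x => 1 - η x, fun x => - η1 x, E, hd, fun x => ?_, hη1c.neg,
    fun x => by linarith [hη1 x], fun x => by linarith [hη0 x], z, fun x hx => by simp [ho x hx],
    fun x hx => by simp [ho1 x hx], ?_, ?_, lower, hE, fun x => by simpa using hE1 x⟩
  · simpa using (he x).const_sub 1
  · intro x
    rcases le_or_gt x 1 with h | h
    · rw [z x h]
    · rw [← z 1 le_rfl]; exact mono h.le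
  · intro x hx
    have := mono' hx
    simp only [z 0 zero_le_one] at this
    linarith

lemma BDYSol.avg {μ : ℝ} {f ft fv fvv : ℝ → ℝ → ℝ} (S : BDYSol μ f ft fv fvv) (hμ : 0 < μ)
    {I : ℝ → ℝ} {s κ : ℝ} (hs : 1 ≤ s) (hI : ∀ t, 1 ≤ t → HasDerivAt I (f 0 t) t)
    (hκ : 1 / μ < κ) : ∀ᶠ n : ℕ in atTop, I (s + n) - I s ≤ κ * n := by
  obtain ⟨θ, θ1, θ2, E, d1, d2, c2, p1, q1, z0, z1, z2, p0, q0, l0, hE, hE2⟩ := bdy_ramp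
  have hκ0 : 0 < κ := lt_trans (by positivity) hκ
  have hs0 : 0 ≤ s := by linarith
  have hκμ : 1 < κ * μ := by rwa [div_lt_iff₀ hμ] at hκ
  obtain ⟨δ, hδ, hδκ⟩ : ∃ δ, 0 < δ ∧ 1 < κ * (μ - 2 * δ) := by
    refine ⟨(κ * μ - 1) / (4 * κ), div_pos (by linarith) (by positivity), ?_⟩
    have : κ * (μ - 2 * ((κ * μ - 1) / (4 * κ))) = κ * μ - (κ * μ - 1) / 2 := by
      field_simp; ring
    rw [this]; linarith
  have c0 : Continuous θ := continuous_iff_continuousAt.2 fun v => (d1 v).continuousAt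
  have c1 : Continuous θ1 := continuous_iff_continuousAt.2 fun v => (d2 v).continuousAt
  -- scaled ramps
  have sc : ∀ c : ℝ, 0 < c → (∀ v, HasDerivAt (fun v => c * θ (v / c)) (θ1 (v / c)) v) ∧
      (∀ v, HasDerivAt (fun v => θ1 (v / c)) (θ2 (v / c) / c) v) := by
    intro c hc
    have hdl : ∀ v, HasDerivAt (fun v => v / c) (1 / c) v := fun v => (hasDerivAt_id v).div_const c
    constructor
    · intro v
      refine (((d1 (v / c)).comp v (hdl v)).const_mul c).congr_deriv ?_
      field_simp
    · intro v
      refine ((d2 (v / c)).comp v (hdl v)).congr_deriv ?_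
      field_simp
  have scz : ∀ c : ℝ, 0 < c → ∀ v, v ≤ c → v / c ≤ 1 := fun c hc v hv => by
    rw [div_le_one hc]; exact hv
  have scq : ∀ c : ℝ, 0 < c → ∀ v, 0 ≤ v → c * θ (v / c) ≤ v := fun c hc v hv => by
    have := mul_le_mul_of_nonneg_left (q0 (v / c) (by positivity)) hc.le
    rwa [mul_div_cancel₀ _ hc.ne'] at this
  have scl : ∀ c : ℝ, 0 < c → ∀ v, v - 2 * c ≤ c * θ (v / c) := fun c hc v => by
    have := mul_le_mul_of_nonneg_left (l0 (v / c)) hc.le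
    rw [mul_sub, mul_div_cancel₀ _ hc.ne'] at this
    linarith
  have scp : ∀ c : ℝ, 0 < c → ∀ v, 0 ≤ c * θ (v / c) := fun c hc v => mul_nonneg hc.le (p0 _)
  have scc : ∀ c : ℝ, Continuous (fun v => c * θ (v / c)) := fun c => by fun_prop
  have scI : ∀ c : ℝ, 0 < c → ∀ t, 0 ≤ t → IntegrableOn (fun v => (c * θ (v / c)) * f v t) (Ioi 0) := by
    intro c hc t ht
    refine S.int_lin (C := 1) ht (scc c) fun v hv => ?_
    rw [abs_of_nonneg (scp c hc v), one_mul]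
    exact scq c hc v hv.le
  -- (i) tails
  set e : ℕ → ℝ := fun n => (∫ v in Ioi (0:ℝ), ((n:ℝ) * θ (v / n)) * f v s) + E * μ / n with he
  have tail : ∀ n : ℕ, 1 ≤ n → ∀ t ∈ Icc s (s + n), ∫ v in Ioi (0:ℝ), ((n:ℝ) * θ (v / n)) * f v t ≤ e n := by
    intro n hn t ht
    have hn1 : (1:ℝ) ≤ n := by exact_mod_cast hn
    have hn0 : (0:ℝ) < n := by linarith
    have h := S.weak_le (φ := fun v => (n:ℝ) * θ (v / n)) (φ1 := fun v => θ1 (v / n))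
      (φ2 := fun v => θ2 (v / n) / n) (B := fun t => E * μ / n ^ 2 * t) (b := fun _ => E * μ / n ^ 2)
      (δ := n) (C := 1 + E) (s := s) (T := t) hn0 (by linarith) hs ht.1 (sc n hn0).1 (sc n hn0).2
      (by fun_prop) (fun v hv => by simp [z0 _ (scz n hn0 v hv)])
      (fun v hv => z1 _ (scz n hn0 v hv)) (fun v hv => by simp [z2 _ (scz n hn0 v hv)])
      (fun v => by rw [abs_of_nonneg (p1 _)]; linarith [q1 (v / n)])
      (fun v => by
        rw [abs_div, abs_of_pos hn0, div_le_iff₀ hn0]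
        nlinarith [hE2 (v / n)])
      (fun r _ => by simpa using (hasDerivAt_id r).const_mul (E * μ / n ^ 2))
      (fun r hr => by
        have hr0 : 0 ≤ r := by linarith [hr.1]
        have ha := (S.pos 0 r le_rfl hr0).le
        have i3 := (S.intv r hr0).const_mul (E / (n:ℝ) ^ 2)
        have : ∫ v in Ioi (0:ℝ), (θ2 (v / n) / n - f 0 r * θ1 (v / n)) * f v r ≤
            ∫ v in Ioi (0:ℝ), E / (n:ℝ) ^ 2 * (v * f v r) := by
          refine setIntegral_mono_on (S.int_bdd (C := E + f 0 r) hr0 (by fun_prop) fun v _ => ?_)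
            i3 measurableSet_Ioi fun v hv => ?_
          · refine (abs_sub _ _).trans ?_
            rw [abs_mul, abs_of_nonneg ha, abs_of_nonneg (p1 _), abs_div, abs_of_pos hn0]
            have : |θ2 (v / n)| / n ≤ E := by
              rw [div_le_iff₀ hn0]; nlinarith [hE2 (v / n)]
            nlinarith [q1 (v / n)]
          · rw [← mul_assoc]
            refine mul_le_mul_of_nonneg_right ?_ (S.pos v r (le_of_lt hv) hr0).le
            have hv0 : (0:ℝ) < v := hv
            have h1 : 0 ≤ f 0 r * θ1 (v / n) := mul_nonneg ha (p1 _)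
            rcases le_or_gt v n with h | h
            · rw [z2 _ (scz n hn0 v h)]
              have : 0 ≤ E / (n:ℝ) ^ 2 * v := by positivity
              rw [zero_div]; linarith
            · have h2 : θ2 (v / n) / n ≤ E / n := by
                gcongr
                exact (le_abs_self _).trans (hE2 _)
              have h3 : E / n ≤ E / (n:ℝ) ^ 2 * v := by
                have : E / n = E / (n:ℝ) ^ 2 * n := by field_simp
                rw [this]
                gcongr
              linarith
        rw [integral_const_mul, S.mean r hr0] at this
        refine this.trans (le_of_eq (by ring)))
    have : E * μ / n ^ 2 * (t - s) ≤ E * μ / n := by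
      have h2 : E * μ / n = E * μ / n ^ 2 * n := by field_simp
      rw [h2]
      exact mul_le_mul_of_nonneg_left (by linarith [ht.2]) (by positivity)
    simp only [he]
    linarith
  -- e n → 0
  have he0 : Tendsto e atTop (nhds 0) := by
    have h1 : Tendsto (fun n : ℕ => ∫ v in Ioi (0:ℝ), ((n:ℝ) * θ (v / n)) * f v s) atTop
        (nhds (∫ v in Ioi (0:ℝ), (0:ℝ))) := by
      refine tendsto_integral_of_dominated_convergence (fun v => v * f v s) ?_ (S.intv s hs0) ?_ ?_
      · intro n
        exact (scc n).aestronglyMeasurable.mul (S.int s hs0).aestronglyMeasurable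
      · intro n
        refine (ae_restrict_iff' measurableSet_Ioi).2 (ae_of_all _ fun v hv => ?_)
        have hp := (S.pos v s (le_of_lt hv) hs0).le
        have hv0 : (0:ℝ) < v := hv
        rcases Nat.eq_zero_or_pos n with h | h
        · subst h
          simp only [Nat.cast_zero, zero_mul, norm_zero]
          positivity
        · have hn0 : (0:ℝ) < n := by exact_mod_cast h
          rw [Real.norm_eq_abs, abs_mul, abs_of_nonneg hp, abs_of_nonneg (scp n hn0 v)]
          exact mul_le_mul_of_nonneg_right (scq n hn0 v hv0.le) hp
      · refine (ae_restrict_iff' measurableSet_Ioi).2 (ae_of_all _ fun v hv => ?_)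
        refine tendsto_const_nhds.congr' ?_
        filter_upwards [eventually_ge_atTop (⌈v⌉₊ + 1)] with n hn
        have hn' : v ≤ n := (Nat.le_ceil v).trans (by exact_mod_cast (Nat.le_succ _).trans hn)
        have hn0 : (0:ℝ) < n := lt_of_lt_of_le hv hn'
        rw [z0 _ (scz n hn0 v hn'), mul_zero, zero_mul]
    rw [integral_zero] at h1
    simpa [he] using h1.add (tendsto_const_div_atTop_nhds_zero_nat (E * μ))
  -- (ii)
  set g : ℕ → ℝ → ℝ := fun n v => δ * θ (v / δ) - n * θ (v / n) with hg
  set φ : ℕ → ℝ → ℝ := fun n v => ∫ w in (0:ℝ)..v, g n w with hφ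
  have gc : ∀ n, Continuous (g n) := fun n => (scc δ).sub (scc n)
  have φd : ∀ n v, HasDerivAt (φ n) (g n v) v := fun n v =>
    ((gc n).integral_hasStrictDerivAt 0 v).hasDerivAt
  have φc : ∀ n, Continuous (φ n) := fun n =>
    continuous_iff_continuousAt.2 fun v => (φd n v).continuousAt
  have φ0 : ∀ n, φ n 0 = 0 := fun n => by simp [hφ]
  have glo : ∀ n : ℕ, 1 ≤ n → ∀ v, 0 ≤ v → -(2 * δ) ≤ g n v := fun n hn v hv => by
    have hn0 : (0:ℝ) < n := by exact_mod_cast hn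
    have := scl δ hδ v
    have := scq n hn0 v hv
    simp only [hg]; linarith
  have gz : ∀ n : ℕ, 1 ≤ n → δ ≤ n → ∀ v, v ≤ δ → g n v = 0 := fun n hn hnδ v hv => by
    have hn0 : (0:ℝ) < n := by exact_mod_cast hn
    simp [hg, z0 _ (scz δ hδ v hv), z0 _ (scz n hn0 v (hv.trans hnδ))]
  have gb : ∀ n : ℕ, 1 ≤ n → δ ≤ n → ∀ v, |g n v| ≤ 2 * n := fun n hn hnδ v => by
    have hn0 : (0:ℝ) < n := by exact_mod_cast hn
    rcases le_or_gt v δ with h | h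
    · rw [gz n hn hnδ v h, abs_zero]; positivity
    · have h1 := glo n hn v (by linarith)
      have h2 := scl n hn0 v
      have h3 := scq δ hδ v (by linarith)
      rw [abs_le]
      constructor
      · linarith
      · simp only [hg]; linarith
  have gv : ∀ n : ℕ, 1 ≤ n → ∀ w, 0 ≤ w → |g n w| ≤ w := fun n hn w hw => by
    have hn0 : (0:ℝ) < n := by exact_mod_cast hn
    have h1 := scp n hn0 w
    have h2 := scp δ hδ w
    have h3 := scq δ hδ w hw
    have h4 := scq n hn0 w hw
    rw [abs_le]
    constructor <;> simp only [hg] <;> linarith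
  have φb : ∀ n : ℕ, 1 ≤ n → δ ≤ n → ∀ v, 0 ≤ v → |φ n v| ≤ 2 * n * v := fun n hn hnδ =>
    bdy_lin_bound (φd n) (φ0 n) (gb n hn hnδ)
  have φv : ∀ n : ℕ, 1 ≤ n → ∀ v, 0 ≤ v → |φ n v| ≤ v * v := fun n hn v hv => by
    have := intervalIntegral.norm_integral_le_of_norm_le_const (a := 0) (b := v) (f := g n) (C := v)
      (fun x hx => by
        rw [uIoc_of_le hv] at hx
        exact (gv n hn x hx.1.le).trans hx.2)
    rw [sub_zero, abs_of_nonneg hv] at this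
    exact this
  have φlo : ∀ n : ℕ, 1 ≤ n → ∀ v, 0 ≤ v → -(2 * δ) * v ≤ φ n v := fun n hn v hv => by
    have : ∫ w in (0:ℝ)..v, -(2 * δ) ≤ ∫ w in (0:ℝ)..v, g n w :=
      intervalIntegral.integral_mono_on hv (by simp) ((gc n).intervalIntegrable _ _)
        (fun x hx => glo n hn x hx.1)
    rw [intervalIntegral.integral_const, smul_eq_mul] at this
    simp only [hφ]; linarith
  have φz : ∀ n : ℕ, 1 ≤ n → δ ≤ n → ∀ v, v ≤ δ → φ n v = 0 := fun n hn hnδ v hv => by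
    refine intervalIntegral.integral_zero_ae (ae_of_all _ fun y hy => ?_)
    exact gz n hn hnδ y (by
      have := (uIoc_subset_uIcc hy).2
      exact this.trans (max_le hδ.le hv))
  set r : ℕ → ℝ := fun n => (∫ v in Ioi (0:ℝ), (φ n v * (1 / n)) * f v s) + (2 * δ * μ) / n with hr
  have hr0 : Tendsto r atTop (nhds 0) := by
    have h1 : Tendsto (fun n : ℕ => ∫ v in Ioi (0:ℝ), (φ n v * (1 / n)) * f v s) atTop
        (nhds (∫ v in Ioi (0:ℝ), (0:ℝ))) := by
      refine tendsto_integral_filter_of_dominated_convergence (fun v => 2 * (v * f v s)) ?_ ?_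
        ((S.intv s hs0).const_mul 2) ?_
      · exact Eventually.of_forall fun n => ((φc n).mul continuous_const).aestronglyMeasurable.mul
          (S.int s hs0).aestronglyMeasurable
      · filter_upwards [eventually_ge_atTop (⌈δ⌉₊ + 1)] with n hn
        have hn' : δ ≤ n := (Nat.le_ceil δ).trans (by exact_mod_cast (Nat.le_succ _).trans hn)
        have hn1 : 1 ≤ n := (Nat.le_add_left 1 _).trans hn
        have hn0 : (0:ℝ) < n := by exact_mod_cast hn1
        refine (ae_restrict_iff' measurableSet_Ioi).2 (ae_of_all _ fun v hv => ?_)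
        have hp := (S.pos v s (le_of_lt hv) hs0).le
        rw [Real.norm_eq_abs, abs_mul, abs_mul, abs_of_nonneg hp,
          abs_of_nonneg (show (0:ℝ) ≤ 1 / n by positivity)]
        calc |φ n v| * (1 / n) * f v s ≤ (2 * n * v) * (1 / n) * f v s := by
              gcongr
              exact φb n hn1 hn' v (le_of_lt hv)
          _ = _ := by field_simp
      · refine (ae_restrict_iff' measurableSet_Ioi).2 (ae_of_all _ fun v hv => ?_)
        have hl : Tendsto (fun n : ℕ => v * v / n) atTop (nhds 0) :=
          tendsto_const_div_atTop_nhds_zero_nat _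
        have h2 : Tendsto (fun n : ℕ => φ n v * (1 / n)) atTop (nhds 0) := by
          refine squeeze_zero_norm' ?_ hl
          filter_upwards [eventually_ge_atTop 1] with n hn
          have hn0 : (0:ℝ) < n := by exact_mod_cast hn
          rw [Real.norm_eq_abs, abs_mul, abs_of_nonneg (show (0:ℝ) ≤ 1 / n by positivity),
            mul_one_div]
          gcongr
          exact φv n hn v (le_of_lt hv)
        simpa using h2.mul_const (f v s)
    rw [integral_zero] at h1
    simpa [hr] using h1.add (tendsto_const_div_atTop_nhds_zero_nat (2 * δ * μ))
  have main : ∀ n : ℕ, 1 ≤ n → δ ≤ n → (μ - 2 * δ - e n) * (I (s + n) - I s) ≤ (1 + r n) * n := by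
    intro n hn hnδ
    have hn0 : (0:ℝ) < n := by exact_mod_cast hn
    have h := S.weak_le (φ := φ n) (φ1 := g n)
      (φ2 := fun v => θ1 (v / δ) - θ1 (v / n)) (B := fun t => t - (μ - 2 * δ - e n) * I t)
      (b := fun t => 1 - (μ - 2 * δ - e n) * f 0 t)
      (δ := δ) (C := 2 * n + 1) (s := s) (T := s + n) hδ (by positivity) hs (by linarith) (φd n)
      (fun v => ((sc δ hδ).1 v).sub ((sc n hn0).1 v)) (by fun_prop)
      (φz n hn hnδ) (gz n hn hnδ)
      (fun v hv => by simp [z1 _ (scz δ hδ v hv), z1 _ (scz n hn0 v (hv.trans hnδ))])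
      (fun v => by linarith [gb n hn hnδ v])
      (fun v => by
        have := p1 (v / δ); have := p1 (v / n); have := q1 (v / δ); have := q1 (v / n)
        rw [abs_le]; constructor <;> linarith)
      (fun t ht => (hasDerivAt_id t).sub ((hI t (hs.trans ht.1)).const_mul _))
      (fun t ht => by
        have ht0 : 0 ≤ t := by linarith [ht.1]
        have ha := (S.pos 0 t le_rfl ht0).le
        have i1 := S.int t ht0
        have i2 := (S.intv t ht0).const_mul (f 0 t)
        have i3 := (S.int t ht0).const_mul (2 * δ * f 0 t)
        have i4 := (scI n hn0 t ht0).const_mul (f 0 t)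
        have : ∫ v in Ioi (0:ℝ), (θ1 (v / δ) - θ1 (v / n) - f 0 t * g n v) * f v t ≤
            ∫ v in Ioi (0:ℝ), (f v t - f 0 t * (v * f v t) + 2 * δ * f 0 t * f v t
              + f 0 t * ((n * θ (v / n)) * f v t)) := by
          refine setIntegral_mono_on (S.int_bdd (C := 1 + f 0 t * (2 * n)) ht0
            (by have := gc n; fun_prop) fun v _ => ?_)
            (((i1.sub i2).add i3).add i4) measurableSet_Ioi fun v hv => ?_
          · refine (abs_sub _ _).trans ?_
            rw [abs_mul, abs_of_nonneg ha]
            gcongr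
            · have := p1 (v / δ); have := p1 (v / n); have := q1 (v / δ); have := q1 (v / n)
              rw [abs_le]; constructor <;> linarith
            · exact gb n hn hnδ v
          · have e1 : f v t - f 0 t * (v * f v t) + 2 * δ * f 0 t * f v t
              + f 0 t * ((n * θ (v / n)) * f v t)
              = (1 - f 0 t * (v - 2 * δ - n * θ (v / n))) * f v t := by ring
            rw [e1]
            refine mul_le_mul_of_nonneg_right ?_ (S.pos v t (le_of_lt hv) ht0).le
            have h1 : f 0 t * (v - 2 * δ - n * θ (v / n)) ≤ f 0 t * g n v :=
              mul_le_mul_of_nonneg_left (by simp only [hg]; linarith [scl δ hδ v]) ha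
            linarith [q1 (v / δ), p1 (v / n)]
        refine this.trans ?_
        have j1 : ∫ v in Ioi (0:ℝ), (f v t - f 0 t * (v * f v t) + 2 * δ * f 0 t * f v t
              + f 0 t * ((n * θ (v / n)) * f v t)) = 1 - f 0 t * μ + 2 * δ * f 0 t * 1 +
              f 0 t * ∫ v in Ioi (0:ℝ), (n * θ (v / n)) * f v t := by
          have i5 : IntegrableOn (fun v => f v t - f 0 t * (v * f v t)) (Ioi 0) := i1.sub i2
          have i6 : IntegrableOn (fun v => f v t - f 0 t * (v * f v t) + 2 * δ * f 0 t * f v t)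
            (Ioi 0) := i5.add i3
          rw [integral_add i6 i4, integral_add i5 i3,
            integral_sub i1 i2, integral_const_mul, integral_const_mul, integral_const_mul,
            S.mass t ht0, S.mean t ht0]
        rw [j1]
        have := mul_le_mul_of_nonneg_left (tail n hn t ht) ha
        linarith)
    have hT0 : 0 ≤ s + n := by linarith
    have lo : -(2 * δ) * μ ≤ ∫ v in Ioi (0:ℝ), φ n v * f v (s + n) := by
      rw [← S.mean (s + n) hT0, ← integral_const_mul]
      refine setIntegral_mono_on ((S.intv _ hT0).const_mul _)
        (S.int_lin hT0 (φc n) fun v hv => φb n hn hnδ v hv.le) measurableSet_Ioi fun v hv => ?_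
      rw [← mul_assoc]
      exact mul_le_mul_of_nonneg_right (φlo n hn v (le_of_lt hv)) (S.pos v _ (le_of_lt hv) hT0).le
    have hrn : r n * n = (∫ v in Ioi (0:ℝ), φ n v * f v s) + 2 * δ * μ := by
      have : ∫ v in Ioi (0:ℝ), (φ n v * (1 / n)) * f v s
          = (1 / n) * ∫ v in Ioi (0:ℝ), φ n v * f v s := by
        rw [← integral_const_mul]
        congr 1
        ext v
        ring
      simp only [hr]
      rw [this]
      field_simp
    have : (1 + r n) * n = n + r n * n := by ring
    rw [this, hrn]
    linarith
  have hev : ∀ᶠ n : ℕ in atTop, 1 + r n < κ * (μ - 2 * δ - e n) := by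
    have l1 : Tendsto (fun n => 1 + r n) atTop (nhds (1 + 0)) := tendsto_const_nhds.add hr0
    have l2 : Tendsto (fun n => κ * (μ - 2 * δ - e n)) atTop (nhds (κ * (μ - 2 * δ - 0))) :=
      (tendsto_const_nhds.sub he0).const_mul κ
    exact l1.eventually_lt l2 (by linarith)
  have hev2 : ∀ᶠ n : ℕ in atTop, -1 < r n := hr0.eventually (lt_mem_nhds (by norm_num))
  filter_upwards [hev, hev2, eventually_ge_atTop (⌈δ⌉₊ + 1)] with n h1 h2 hn
  have hn' : δ ≤ n := (Nat.le_ceil δ).trans (by exact_mod_cast (Nat.le_succ _).trans hn)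
  have hn1 : 1 ≤ n := (Nat.le_add_left 1 _).trans hn
  have hn0 : (0:ℝ) < n := by exact_mod_cast hn1
  have hm := main n hn1 hn'
  have hp : 0 < μ - 2 * δ - e n := by
    by_contra hh
    have := mul_nonpos_of_nonneg_of_nonpos hκ0.le (not_lt.1 hh)
    linarith
  refine le_of_mul_le_mul_left (hm.trans ?_) hp
  nlinarith

lemma BDYSol.select {μ : ℝ} {f ft fv fvv : ℝ → ℝ → ℝ} (S : BDYSol μ f ft fv fvv) (hμ : 0 < μ)
    {H D : ℝ → ℝ} (hH : ∀ t, 0 ≤ t → 0 ≤ H t) (hD : ∀ t, 0 ≤ t → 0 ≤ D t)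
    (hdiss : ∀ t : ℝ, 0 ≤ t → HasDerivAt H (-(D t)) t) {ε1 ε2 : ℝ} (h1 : 0 < ε1) (h2 : 0 < ε2)
    (T0 : ℝ) : ∃ t, T0 ≤ t ∧ 1 ≤ t ∧ D t ≤ ε1 ∧ f 0 t ≤ 1 / μ + ε2 := by
  by_contra! hcon
  set s := max T0 1 with hs
  have hs1 : 1 ≤ s := le_max_right _ _
  have hac : Continuous (fun t => f 0 (max t 0)) :=
    S.cont0.comp_continuous (by fun_prop) (fun t => mem_Ici.2 (le_max_right _ _))
  obtain ⟨I, hI⟩ : ∃ I : ℝ → ℝ, ∀ t, 1 ≤ t → HasDerivAt I (f 0 t) t := by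
    refine ⟨fun t => ∫ r in (0:ℝ)..t, f 0 (max r 0), fun t ht => ?_⟩
    have := (hac.integral_hasStrictDerivAt 0 t).hasDerivAt
    rwa [max_eq_left (by linarith : (0:ℝ) ≤ t)] at this
  have hk : 0 < 1 / μ + ε2 := by positivity
  set c := (1 / μ + ε2) / ε1 with hc
  have hc0 : 0 < c := by positivity
  have hG : ∀ t ∈ Ici s, HasDerivAt (fun t => I t - c * H t - (1 / μ + ε2) * t)
      (f 0 t - c * (-(D t)) - (1 / μ + ε2) * 1) t := fun t ht =>
    ((hI t (hs1.trans ht)).sub ((hdiss t (by linarith [hs1.trans ht])).const_mul c)).sub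
      ((hasDerivAt_id t).const_mul _)
  have mono := monotoneOn_of_deriv_nonneg (convex_Ici s)
    (fun t ht => (hG t ht).continuousAt.continuousWithinAt)
    (fun t ht => (hG t (interior_subset ht)).differentiableAt.differentiableWithinAt)
    (fun t ht => by
      have ht' : s ≤ t := interior_subset ht
      rw [(hG t ht').deriv]
      have ht0 : 0 ≤ t := by linarith
      have ha := S.pos 0 t le_rfl ht0
      have hDt := hD t ht0
      rcases le_or_gt (D t) ε1 with h | h
      · have := hcon t ((le_max_left _ _).trans ht') (hs1.trans ht') h
        have : 0 ≤ c * D t := by positivity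
        linarith
      · have : 1 / μ + ε2 ≤ c * D t := by
          have e : 1 / μ + ε2 = c * ε1 := by rw [hc]; field_simp
          rw [e]
          gcongr
        linarith)
  have hav := S.avg hμ (κ := 1 / μ + ε2 / 2) hs1 hI (by linarith)
  obtain ⟨N, hN⟩ := exists_nat_gt (c * H s / (ε2 / 2))
  obtain ⟨n, hn, hn2⟩ := (hav.and (eventually_ge_atTop N)).exists
  have hn3 : c * H s / (ε2 / 2) < n := hN.trans_le (by exact_mod_cast hn2)
  rw [div_lt_iff₀ (by positivity)] at hn3
  have hm := mono (show s ∈ Ici s from self_mem_Ici)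
    (show s + n ∈ Ici s from by simp) (by simp)
  simp only at hm
  have : 0 ≤ c * H (s + n) := mul_nonneg hc0.le (hH _ (by positivity))
  linarith

lemma bdy_gibbs {μ : ℝ} (hμ : 0 < μ) :
    IntegrableOn (fun v => (1 / μ) * Real.exp (-v / μ)) (Ioi 0) ∧
    ∫ v in Ioi (0:ℝ), (1 / μ) * Real.exp (-v / μ) = 1 := by
  have e : ∀ v : ℝ, -v / μ = (-(1 / μ)) * v := fun v => by ring
  have hneg : -(1 / μ) < 0 := by have : 0 < 1 / μ := by positivity
                                 linarith
  simp only [e]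
  constructor
  · exact (integrableOn_exp_mul_Ioi hneg 0).const_mul _
  · rw [integral_const_mul, integral_exp_mul_Ioi hneg 0]
    simp
    field_simp

lemma bdy_entropy_nonneg {μ : ℝ} (hμ : 0 < μ) {u : ℝ → ℝ} (hu : ∀ v, 0 < v → 0 < u v)
    (hi : IntegrableOn u (Ioi 0)) (hm : ∫ v in Ioi (0:ℝ), u v = 1)
    (hh : IntegrableOn (fun v => u v * Real.log (u v / ((1 / μ) * Real.exp (-v / μ)))) (Ioi 0)) :
    0 ≤ ∫ v in Ioi (0:ℝ), u v * Real.log (u v / ((1 / μ) * Real.exp (-v / μ))) := by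
  obtain ⟨g1, g2⟩ := bdy_gibbs hμ
  have h0 : ∫ v in Ioi (0:ℝ), (u v - (1 / μ) * Real.exp (-v / μ)) = 0 := by
    rw [integral_sub hi g1, hm, g2, sub_self]
  refine h0.symm.le.trans ?_
  have hg3 : IntegrableOn (fun v => u v - (1 / μ) * Real.exp (-v / μ)) (Ioi 0) := hi.sub g1
  refine setIntegral_mono_on hg3 hh measurableSet_Ioi fun v hv => ?_
  have hp := hu v hv
  have hg : 0 < (1 / μ) * Real.exp (-v / μ) := by positivity
  have := mul_le_mul_of_nonneg_left (Real.one_sub_inv_le_log_of_pos (div_pos hp hg)) hp.le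
  refine le_trans (le_of_eq ?_) this
  rw [inv_div]
  field_simp

lemma BDYSol.profile {μ : ℝ} {f ft fv fvv : ℝ → ℝ → ℝ} (S : BDYSol μ f ft fv fvv)
    {t ε : ℝ} (ht : 1 ≤ t) (hε : 0 < ε)
    (hD : ∫ v in Ioi (0:ℝ), (fv v t + f 0 t * f v t) ^ 2 / f v t ≤ ε ^ 2) {v : ℝ} (hv : 0 ≤ v) :
    |√(f v t) - √(f 0 t) * Real.exp (-(f 0 t) * v / 2)| ≤ ε * (v + 1) := by
  have ht0 : 0 ≤ t := by linarith
  set a := f 0 t with ha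
  have ha0 : 0 < a := S.pos 0 t le_rfl ht0
  set J : ℝ → ℝ := fun w => (fv w t + a * f w t) ^ 2 / f w t with hJ
  have hJc : ContinuousOn J (Ici 0) := S.dcont ht0
  have hJi : IntegrableOn J (Ioi 0) := S.dint ht
  have hu : uIcc 0 v = Icc 0 v := uIcc_of_le hv
  have hfc : ContinuousOn (fun w => f w t) (Icc 0 v) := fun w hw =>
    (S.dv w t hw.1 ht0).continuousAt.continuousWithinAt
  have hfvc : ContinuousOn (fun w => fv w t) (Icc 0 v) := fun w hw =>
    (S.dvv w t hw.1 ht0).continuousAt.continuousWithinAt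
  have hsq : ContinuousOn (fun w => √(f w t)) (Icc 0 v) := hfc.sqrt
  have hd : ∀ w ∈ uIcc 0 v, HasDerivAt (fun w => √(f w t) * Real.exp (a * w / 2))
      (Real.exp (a * w / 2) * ((fv w t + a * f w t) / (2 * √(f w t)))) w := by
    intro w hw
    rw [hu] at hw
    have hp := S.pos w t hw.1 ht0
    have hsp : 0 < √(f w t) := Real.sqrt_pos.2 hp
    have d1 := (S.dv w t hw.1 ht0).sqrt hp.ne'
    have d2 : HasDerivAt (fun w => Real.exp (a * w / 2)) (Real.exp (a * w / 2) * (a * 1 / 2)) w :=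
      (((hasDerivAt_id w).const_mul a).div_const 2).exp
    refine (d1.mul d2).congr_deriv ?_
    have hss : f w t = √(f w t) * √(f w t) := (Real.mul_self_sqrt hp.le).symm
    rw [show a * f w t = a * (√(f w t) * √(f w t)) by rw [← hss]]
    field_simp
  have hc' : ContinuousOn (fun w => Real.exp (a * w / 2) * ((fv w t + a * f w t) / (2 * √(f w t))))
      (uIcc 0 v) := by
    rw [hu]
    refine ContinuousOn.mul (by fun_prop) (ContinuousOn.div (hfvc.add (continuousOn_const.mul hfc))
      (continuousOn_const.mul hsq) fun w hw => ?_)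
    have := Real.sqrt_pos.2 (S.pos w t hw.1 ht0)
    positivity
  have ftc := intervalIntegral.integral_eq_sub_of_hasDerivAt hd hc'.intervalIntegrable
  have hJint : IntervalIntegrable J volume 0 v := by
    refine ContinuousOn.intervalIntegrable (hJc.mono ?_)
    rw [hu]; exact fun w hw => hw.1
  have hJle : ∫ w in (0:ℝ)..v, J w ≤ ε ^ 2 := by
    rw [intervalIntegral.integral_of_le hv]
    refine le_trans (setIntegral_mono_set hJi ?_ (Ioc_subset_Ioi_self.eventuallyLE)) hD
    refine (ae_restrict_iff' measurableSet_Ioi).2 (ae_of_all _ fun w hw => ?_)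
    exact div_nonneg (sq_nonneg _) (S.pos w t (le_of_lt hw) ht0).le
  have hb : ‖∫ w in (0:ℝ)..v, Real.exp (a * w / 2) * ((fv w t + a * f w t) / (2 * √(f w t)))‖ ≤
      ∫ w in (0:ℝ)..v, Real.exp (a * v / 2) * (ε + J w * (1 / ε)) := by
    refine intervalIntegral.norm_integral_le_of_norm_le hv (ae_of_all _ fun w hw => ?_)
      (((intervalIntegrable_const (c := ε)).add (hJint.mul_const _)).const_mul _)
    have hp := S.pos w t hw.1.le ht0
    have hsp : 0 < √(f w t) := Real.sqrt_pos.2 hp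
    rw [Real.norm_eq_abs, abs_mul, abs_of_pos (Real.exp_pos _)]
    refine mul_le_mul ?_ ?_ (abs_nonneg _) (Real.exp_pos _).le
    · apply Real.exp_le_exp.2
      have := hw.2
      gcongr
    · set y := (fv w t + a * f w t) / √(f w t) with hy
      have e1 : (fv w t + a * f w t) / (2 * √(f w t)) = y / 2 := by rw [hy]; field_simp
      have e2 : J w = y ^ 2 := by
        rw [hy, div_pow, Real.sq_sqrt hp.le]
      rw [e1, e2, mul_one_div]
      rw [← sub_nonneg]
      have e3 : |y / 2| = |y| / 2 := by rw [abs_div, abs_two]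
      rw [e3, ← sq_abs y]
      have : ε + |y| ^ 2 / ε - |y| / 2 = ((ε - |y|) ^ 2 + 3 / 2 * ε * |y|) / ε := by
        field_simp; ring
      rw [this]; positivity
  rw [ftc, intervalIntegral.integral_const_mul, intervalIntegral.integral_add (by simp)
    (hJint.mul_const _), intervalIntegral.integral_mul_const, intervalIntegral.integral_const,
    smul_eq_mul, sub_zero, Real.norm_eq_abs] at hb
  have h3 : (∫ w in (0:ℝ)..v, J w) * (1 / ε) ≤ ε := by
    rw [mul_one_div, div_le_iff₀ hε]; nlinarith
  have h4 : √(f v t) * Real.exp (a * v / 2) - √(f 0 t) * Real.exp (a * 0 / 2)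
      = Real.exp (a * v / 2) * (√(f v t) - √a * Real.exp (-a * v / 2)) := by
    have : Real.exp (a * v / 2) * Real.exp (-a * v / 2) = 1 := by
      rw [← Real.exp_add]; ring_nf; exact Real.exp_zero
    rw [mul_zero, zero_div, Real.exp_zero, mul_sub, mul_left_comm, this, ha]
    ring
  rw [h4, abs_mul, abs_of_pos (Real.exp_pos _)] at hb
  refine le_of_mul_le_mul_left (hb.trans ?_) (Real.exp_pos (a * v / 2))
  refine mul_le_mul_of_nonneg_left ?_ (Real.exp_pos _).le
  linarith

lemma bdy_scheffe {g : ℝ → ℝ} {u : ℕ → ℝ → ℝ} (hg0 : ∀ v, 0 < v → 0 ≤ g v)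
    (hg : IntegrableOn g (Ioi 0)) (hg1 : ∫ v in Ioi (0:ℝ), g v = 1)
    (hu0 : ∀ k v, 0 < v → 0 ≤ u k v) (hu : ∀ k, IntegrableOn (u k) (Ioi 0))
    (hu1 : ∀ k, ∫ v in Ioi (0:ℝ), u k v = 1)
    (hlim : ∀ v, 0 < v → Tendsto (fun k => u k v) atTop (nhds (g v))) :
    Tendsto (fun k => ∫ v in Ioi (0:ℝ), |u k v - g v|) atTop (nhds 0) := by
  have hi : ∀ k, IntegrableOn (fun v => max (g v - u k v) 0) (Ioi 0) := fun k =>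
    (hg.sub (hu k)).sup (integrable_zero _ _ _)
  have h1 : Tendsto (fun k => ∫ v in Ioi (0:ℝ), max (g v - u k v) 0) atTop
      (nhds (∫ v in Ioi (0:ℝ), (0:ℝ))) := by
    refine tendsto_integral_of_dominated_convergence g (fun k => (hi k).aestronglyMeasurable) hg ?_ ?_
    · intro k
      refine (ae_restrict_iff' measurableSet_Ioi).2 (ae_of_all _ fun v hv => ?_)
      rw [Real.norm_eq_abs, abs_of_nonneg (le_max_right _ _)]
      exact max_le (by linarith [hu0 k v hv]) (hg0 v hv)
    · refine (ae_restrict_iff' measurableSet_Ioi).2 (ae_of_all _ fun v hv => ?_)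
      have := ((tendsto_const_nhds (x := g v)).sub (hlim v hv)).max (tendsto_const_nhds (x := (0:ℝ)))
      simpa using this
  rw [integral_zero] at h1
  have h2 := h1.const_mul 2
  rw [mul_zero] at h2
  refine h2.congr fun k => ?_
  have e : ∀ v, |u k v - g v| = (u k v - g v) + 2 * max (g v - u k v) 0 := fun v => by
    rcases le_total (u k v) (g v) with h | h
    · rw [abs_of_nonpos (by linarith), max_eq_left (by linarith)]; ring
    · rw [abs_of_nonneg (by linarith), max_eq_right (by linarith)]; ring
  simp only [e]
  have i1 : IntegrableOn (fun v => u k v - g v) (Ioi 0) := (hu k).sub hg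
  rw [integral_add i1 ((hi k).const_mul 2), integral_sub (hu k) hg, hu1 k, hg1,
    integral_const_mul]
  ring

lemma bdy_hellinger_le {a b : ℝ} (ha : 0 ≤ a) (hb : 0 ≤ b) : (√a - √b) ^ 2 ≤ |a - b| := by
  have h1 : a - b = (√a - √b) * (√a + √b) := by
    have := Real.mul_self_sqrt ha
    have := Real.mul_self_sqrt hb
    nlinarith
  rw [h1, abs_mul, ← sq_abs, sq]
  have h2 := Real.sqrt_nonneg a
  have h3 := Real.sqrt_nonneg b
  refine mul_le_mul_of_nonneg_left ?_ (abs_nonneg _)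
  rw [abs_of_nonneg (by linarith : 0 ≤ √a + √b), abs_le]
  constructor <;> linarith

/-- Identification of the limiting boundary value by conservation of the mean. -/
lemma bdy_identify {μ α : ℝ} (hμ : 0 < μ) (hα : 0 ≤ α) (hα1 : α ≤ 1 / μ)
    (h : ∀ R, 0 < R → R - μ ≤ ∫ v in (0:ℝ)..R, (R - v) * (α * Real.exp (-α * v))) : α = 1 / μ := by
  have hα0 : 0 < α := by
    rcases hα.lt_or_eq with h' | h'
    · exact h'
    · have := h (μ + 1) (by linarith)
      rw [← h'] at this
      simp at this
      linarith
  have key : ∀ R, 0 < R → 1 - α * μ ≤ Real.exp (-α * R) := by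
    intro R hR
    have hd : ∀ v ∈ uIcc 0 R, HasDerivAt (fun v => -(R - v) * Real.exp (-α * v)
        + Real.exp (-α * v) / α) ((R - v) * (α * Real.exp (-α * v))) v := by
      intro v _
      have d1 : HasDerivAt (fun v => Real.exp (-α * v)) (Real.exp (-α * v) * (-α * 1)) v :=
        ((hasDerivAt_id v).const_mul (-α)).exp
      have d2 : HasDerivAt (fun v => -(R - v)) (-(0 - 1)) v :=
        ((hasDerivAt_const v R).sub (hasDerivAt_id v)).neg
      refine ((d2.mul d1).add (d1.div_const α)).congr_deriv ?_
      field_simp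
      ring
    have ftc := intervalIntegral.integral_eq_sub_of_hasDerivAt hd
      (Continuous.intervalIntegrable (by fun_prop) _ _)
    have h' := h R hR
    rw [ftc] at h'
    simp only [sub_self, neg_zero, zero_mul, zero_add, sub_zero, mul_zero, Real.exp_zero, mul_one]
      at h'
    have h2 : 1 / α - Real.exp (-α * R) / α ≤ μ := by linarith
    rw [← sub_div, div_le_iff₀ hα0] at h2
    linarith
  have lim : Tendsto (fun R => Real.exp (-α * R)) atTop (nhds 0) := by
    refine Real.tendsto_exp_atBot.comp ?_
    exact (tendsto_id.const_mul_atTop_of_neg (by linarith))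
  have := ge_of_tendsto lim ((eventually_gt_atTop 0).mono key)
  refine le_antisymm hα1 ?_
  rw [div_le_iff₀ hμ]
  linarith

lemma BDYSol.lower_mean {μ : ℝ} {f ft fv fvv : ℝ → ℝ → ℝ} (S : BDYSol μ f ft fv fvv)
    {t R : ℝ} (ht : 0 ≤ t) (hR : 0 < R) : R - μ ≤ ∫ v in (0:ℝ)..R, (R - v) * f v t := by
  have i1 := (S.int t ht).const_mul R
  have i2 := S.intv t ht
  have i3 : IntegrableOn (fun v => (R - v) * f v t) (Ioi 0) := by
    refine (i1.sub i2).congr (ae_of_all _ fun v => ?_)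
    simp only [Pi.sub_apply]
    ring
  have e1 : ∫ v in Ioi (0:ℝ), (R - v) * f v t = R - μ := by
    have : ∀ v, (R - v) * f v t = R * f v t - v * f v t := fun v => by ring
    simp only [this]
    rw [integral_sub i1 i2, integral_const_mul, S.mass t ht, S.mean t ht, mul_one]
  have i4 : IntegrableOn (fun v => (R - v) * f v t) (Ioi R) :=
    i3.mono_set (Ioi_subset_Ioi hR.le)
  have e2 := intervalIntegral.integral_interval_add_Ioi i3 i4
  have e3 : ∫ v in Ioi R, (R - v) * f v t ≤ 0 := by
    refine setIntegral_nonpos measurableSet_Ioi fun v hv => ?_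
    have hv' : R < v := hv
    exact mul_nonpos_of_nonpos_of_nonneg (by linarith) (S.pos v t (by linarith) ht).le
  linarith

lemma BDYSol.conv {μ : ℝ} {f ft fv fvv : ℝ → ℝ → ℝ} (S : BDYSol μ f ft fv fvv) (hμ : 0 < μ)
    {τ ε : ℕ → ℝ} {α : ℝ} (hτ : ∀ k, 1 ≤ τ k) (hε : ∀ k, 0 < ε k) (hε1 : ∀ k, ε k ≤ 1)
    (hε0 : Tendsto ε atTop (nhds 0))
    (hD : ∀ k, ∫ v in Ioi (0:ℝ), (fv v (τ k) + f 0 (τ k) * f v (τ k)) ^ 2 / f v (τ k) ≤ (ε k) ^ 2)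
    (hM : ∀ k, f 0 (τ k) ≤ 1 / μ + ε k)
    (hα : Tendsto (fun k => f 0 (τ k)) atTop (nhds α)) :
    ∀ v, 0 < v → Tendsto (fun k => f v (τ k)) atTop (nhds ((1 / μ) * Real.exp (-v / μ))) := by
  have hτ0 : ∀ k, 0 ≤ τ k := fun k => zero_le_one.trans (hτ k)
  have hα0 : 0 ≤ α := ge_of_tendsto' hα fun k => (S.pos 0 _ le_rfl (hτ0 k)).le
  have hα1 : α ≤ 1 / μ := by
    have : Tendsto (fun k => 1 / μ + ε k) atTop (nhds (1 / μ + 0)) := hε0.const_add _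
    rw [add_zero] at this
    exact le_of_tendsto_of_tendsto' hα this hM
  have pt : ∀ v, 0 ≤ v → Tendsto (fun k => f v (τ k)) atTop (nhds (α * Real.exp (-α * v))) := by
    intro v hv
    have h1 : Tendsto (fun k => √(f v (τ k)) - √(f 0 (τ k)) * Real.exp (-(f 0 (τ k)) * v / 2))
        atTop (nhds 0) := by
      refine squeeze_zero_norm (fun k => S.profile (hτ k) (hε k) (hD k) hv) ?_
      simpa using hε0.mul_const (v + 1)
    have h2 : Tendsto (fun k => √(f 0 (τ k)) * Real.exp (-(f 0 (τ k)) * v / 2)) atTop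
        (nhds (√α * Real.exp (-α * v / 2))) :=
      hα.sqrt.mul ((Real.continuous_exp.tendsto _).comp (((hα.neg).mul_const v).div_const 2))
    have h3 := (h1.add h2).pow 2
    have e1 : (0 + √α * Real.exp (-α * v / 2)) ^ 2 = α * Real.exp (-α * v) := by
      rw [zero_add, mul_pow, Real.sq_sqrt hα0, sq (Real.exp _), ← Real.exp_add]
      ring_nf
    rw [e1] at h3
    refine h3.congr fun k => ?_
    rw [sub_add_cancel, Real.sq_sqrt (S.pos v _ hv (hτ0 k)).le]
  have hid : α = 1 / μ := by
    refine bdy_identify hμ hα0 hα1 fun R hR => ?_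
    have lim : Tendsto (fun k => ∫ v in (0:ℝ)..R, (R - v) * f v (τ k)) atTop
        (nhds (∫ v in (0:ℝ)..R, (R - v) * (α * Real.exp (-α * v)))) := by
      refine intervalIntegral.tendsto_integral_filter_of_dominated_convergence
        (fun _ => R * ((R + 1) + √(1 / μ + 1)) ^ 2) ?_ ?_ (by simp) ?_
      · refine Eventually.of_forall fun k => ?_
        rw [uIoc_of_le hR.le]
        refine (Continuous.aestronglyMeasurable (by fun_prop)).mul
          ((S.int _ (hτ0 k)).mono_set Ioc_subset_Ioi_self).aestronglyMeasurable
      · refine Eventually.of_forall fun k => ae_of_all _ fun v hv => ?_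
        rw [uIoc_of_le hR.le] at hv
        have hp := (S.pos v _ hv.1.le (hτ0 k)).le
        have ha := (S.pos 0 _ le_rfl (hτ0 k)).le
        rw [Real.norm_eq_abs, abs_mul, abs_of_nonneg hp, abs_of_nonneg (by linarith [hv.2])]
        refine mul_le_mul (by linarith [hv.1]) ?_ hp hR.le
        rw [← Real.sq_sqrt hp]
        refine pow_le_pow_left₀ (Real.sqrt_nonneg _) ?_ 2
        have h1 := (le_abs_self _).trans (S.profile (hτ k) (hε k) (hD k) hv.1.le)
        have h2 : √(f 0 (τ k)) * Real.exp (-(f 0 (τ k)) * v / 2) ≤ √(1 / μ + 1) * 1 := by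
          refine mul_le_mul (Real.sqrt_le_sqrt ((hM k).trans (by linarith [hε1 k]))) ?_
            (Real.exp_pos _).le (Real.sqrt_nonneg _)
          rw [Real.exp_le_one_iff]
          have := mul_nonneg ha hv.1.le
          linarith
        have h3 : ε k * (v + 1) ≤ 1 * (R + 1) :=
          mul_le_mul (hε1 k) (by linarith [hv.2]) (by linarith [hv.1]) zero_le_one
        linarith
      · refine ae_of_all _ fun v hv => ?_
        rw [uIoc_of_le hR.le] at hv
        exact (pt v hv.1.le).const_mul _
    exact ge_of_tendsto' lim fun k => S.lower_mean (hτ0 k) hR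
  intro v hv
  have := pt v hv.le
  rw [hid] at this
  have e : -(1 / μ) * v = -v / μ := by ring
  rwa [e] at this

/-- **Convergence to the Boltzmann–Gibbs equilibrium along a subsequence of times.**
Let `μ > 0`, `f∞(v) = (1/μ) e^{−v/μ}`, and let `f` be a strictly positive classical
solution of the BDY PDE which is for each `t` a probability density with mean `μ`,
satisfies the entropy dissipation identity `d/dt H[f|f∞](t) = −D[f](t)` for all `t ≥ 0`,
and has finite initial relative entropy `H[f⁰|f∞] < ∞` where `f⁰ = f(·,0)`. Then there is
a sequence of times `τ_k → ∞` along which both the Hellinger distance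
`d_H(f(·,τ_k), f∞) → 0` and the `L¹` distance `∫₀^∞ |f(v,τ_k) − f∞(v)| dv → 0`. -/
theorem BDY_PDE_L1_convergence_subsequence
    (μ : ℝ) (hμ : 0 < μ)
    (f ft fv fvv : ℝ → ℝ → ℝ)
    (hcont : ContinuousOn (fun p : ℝ × ℝ => f p.1 p.2) (Ici 0 ×ˢ Ici 0))
    (hfv : ∀ v t : ℝ, 0 ≤ v → 0 ≤ t → HasDerivAt (fun w => f w t) (fv v t) v)
    (hfvv : ∀ v t : ℝ, 0 ≤ v → 0 ≤ t → HasDerivAt (fun w => fv w t) (fvv v t) v)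
    (hft : ∀ v t : ℝ, 0 ≤ v → 0 ≤ t → HasDerivAt (fun s => f v s) (ft v t) t)
    (hpos : ∀ v t : ℝ, 0 ≤ v → 0 ≤ t → 0 < f v t)
    (hint : ∀ t : ℝ, 0 ≤ t → IntegrableOn (fun v => f v t) (Ioi 0))
    (hint_vf : ∀ t : ℝ, 0 ≤ t → IntegrableOn (fun v => v * f v t) (Ioi 0))
    (hmass : ∀ t : ℝ, 0 ≤ t → ∫ v in Ioi (0:ℝ), f v t = 1)
    (hmean : ∀ t : ℝ, 0 ≤ t → ∫ v in Ioi (0:ℝ), v * f v t = μ)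
    (hPDE : ∀ v t : ℝ, 0 < v → 0 ≤ t → ft v t = fvv v t + f 0 t * fv v t)
    (hBC : ∀ t : ℝ, 0 ≤ t → fv 0 t + (f 0 t) ^ 2 = 0)
    -- the relative entropy and the entropy dissipation functional
    (H D : ℝ → ℝ)
    (hHdef : ∀ t : ℝ, H t = ∫ v in Ioi (0:ℝ),
      f v t * Real.log (f v t / ((1 / μ) * Real.exp (-v / μ))))
    (hDdef : ∀ t : ℝ, D t = ∫ v in Ioi (0:ℝ), (fv v t + f 0 t * f v t) ^ 2 / f v t)
    -- the relative entropy is finite (its integrand is integrable), in particular at t = 0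
    (hHint : ∀ t : ℝ, 0 ≤ t → IntegrableOn
      (fun v => f v t * Real.log (f v t / ((1 / μ) * Real.exp (-v / μ)))) (Ioi 0))
    -- the entropy dissipation identity
    (hdiss : ∀ t : ℝ, 0 ≤ t → HasDerivAt H (-(D t)) t) :
    ∃ τ : ℕ → ℝ, Tendsto τ atTop atTop ∧
      Tendsto (fun k => Real.sqrt (∫ v in Ioi (0:ℝ),
        (Real.sqrt (f v (τ k)) - Real.sqrt ((1 / μ) * Real.exp (-v / μ))) ^ 2))
        atTop (nhds 0) ∧
      Tendsto (fun k => ∫ v in Ioi (0:ℝ), |f v (τ k) - (1 / μ) * Real.exp (-v / μ)|)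
        atTop (nhds 0) := by
  have S : BDYSol μ f ft fv fvv :=
    ⟨hcont, hfv, hfvv, hft, hpos, hint, hint_vf, hmass, hmean, hPDE⟩
  have hH : ∀ t, 0 ≤ t → 0 ≤ H t := fun t ht => by
    rw [hHdef t]
    exact bdy_entropy_nonneg hμ (u := fun v => f v t) (fun v hv => hpos v t hv.le ht) (hint t ht)
      (hmass t ht) (hHint t ht)
  have hD : ∀ t, 0 ≤ t → 0 ≤ D t := fun t ht => by
    rw [hDdef t]
    exact setIntegral_nonneg measurableSet_Ioi fun v hv =>
      div_nonneg (sq_nonneg _) (hpos v t (le_of_lt hv) ht).le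
  set ε : ℕ → ℝ := fun k => 1 / ((k:ℝ) + 1) with hε
  have hεp : ∀ k, 0 < ε k := fun k => by simp only [hε]; positivity
  have hε1 : ∀ k, ε k ≤ 1 := fun k => by
    simp only [hε]
    rw [div_le_one (by positivity)]
    have : (0:ℝ) ≤ k := Nat.cast_nonneg k
    linarith
  have hε0 : Tendsto ε atTop (nhds 0) := tendsto_one_div_add_atTop_nhds_zero_nat
  have hsel := fun k : ℕ => S.select hμ hH hD hdiss (pow_pos (hεp k) 2) (hεp k) (k:ℝ)
  choose σ hσ1 hσ2 hσ3 hσ4 using hsel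
  have hσ0 : ∀ k, 0 ≤ σ k := fun k => zero_le_one.trans (hσ2 k)
  obtain ⟨α, -, ψ, hψ, hα⟩ := (isCompact_Icc (a := (0:ℝ)) (b := 1 / μ + 1)).tendsto_subseq
    (x := fun k => f 0 (σ k))
    (fun k => ⟨(hpos 0 _ le_rfl (hσ0 k)).le, (hσ4 k).trans (by linarith [hε1 k])⟩)
  have hψt := hψ.tendsto_atTop
  have hσt : Tendsto σ atTop atTop :=
    tendsto_atTop_mono hσ1 tendsto_natCast_atTop_atTop
  have hτ0 : ∀ k, 0 ≤ σ (ψ k) := fun k => hσ0 _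
  have hpt := S.conv hμ (τ := fun k => σ (ψ k)) (ε := fun k => ε (ψ k)) (fun k => hσ2 _)
    (fun k => hεp _) (fun k => hε1 _) (hε0.comp hψt)
    (fun k => by rw [← hDdef]; exact hσ3 _) (fun k => hσ4 _) hα
  obtain ⟨g1, g2⟩ := bdy_gibbs hμ
  have hL1 := bdy_scheffe (g := fun v => (1 / μ) * Real.exp (-v / μ)) (u := fun k v => f v (σ (ψ k)))
    (fun v _ => by positivity) g1 g2 (fun k v hv => (hpos v _ hv.le (hτ0 k)).le)
    (fun k => hint _ (hτ0 k)) (fun k => hmass _ (hτ0 k)) hpt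
  refine ⟨fun k => σ (ψ k), hσt.comp hψt, ?_, hL1⟩
  have hHel : Tendsto (fun k => ∫ v in Ioi (0:ℝ),
      (√(f v (σ (ψ k))) - √((1 / μ) * Real.exp (-v / μ))) ^ 2) atTop (nhds 0) := by
    refine squeeze_zero (fun k => integral_nonneg fun v => sq_nonneg _) (fun k => ?_) hL1
    have i1 : IntegrableOn (fun v => |f v (σ (ψ k)) - (1 / μ) * Real.exp (-v / μ)|) (Ioi 0) :=
      ((hint _ (hτ0 k)).sub g1).abs
    refine integral_mono_of_nonneg (ae_of_all _ fun v => sq_nonneg _) i1 ?_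
    refine (ae_restrict_iff' measurableSet_Ioi).2 (ae_of_all _ fun v hv => ?_)
    exact bdy_hellinger_le (hpos v _ (le_of_lt hv) (hτ0 k)).le (by positivity)
  simpa using hHel.sqrt
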